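/- Let A be an n×n real positive-semidefinite matrix, let 1 ≤ k ≤ n, and let Ω be an n×k random matrix with independent standard normal entries. Define the Nyström approximation Â = AΩ((Ω*AΩ)†)Ω*A. Then E√(‖A − Â‖_∞) ≤ min over natural numbers ϱ with ϱ < k − 1 of [(1 + √(ϱ/(k − ϱ − 1)))·√(σ_{ϱ+1}(A)) + (e·√k/(k − ϱ))·√(σ_{ϱ+1}^{(1)}(A))], where e is Euler's number. -/

import Mathlib

open Matrix MeasureTheory ProbabilityTheory
open scoped ENNReal NNReal ComplexOrder Classical

namespace PsdSketch

variable {𝕜 : Type*} [RCLike 𝕜]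

/-- The four Penrose conditions characterizing the Moore–Penrose pseudoinverse. -/
def IsMoorePenrose {m k : ℕ} (M : Matrix (Fin m) (Fin k) 𝕜)
    (X : Matrix (Fin k) (Fin m) 𝕜) : Prop :=
  M * X * M = M ∧ X * M * X = X ∧ (M * X)ᴴ = M * X ∧ (X * M)ᴴ = X * M

/-- The Moore–Penrose pseudoinverse `M†` (the unique matrix satisfying the
Penrose conditions). -/
noncomputable def pinv {m k : ℕ} (M : Matrix (Fin m) (Fin k) 𝕜) :
    Matrix (Fin k) (Fin m) 𝕜 :=
  if h : ∃ X, IsMoorePenrose M X then h.choose else 0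

/-- The Nyström approximation `Â = A Ω ((Ω* A Ω)†) Ω* A`. -/
noncomputable def nystrom {n k : ℕ} (A : Matrix (Fin n) (Fin n) 𝕜)
    (Ω : Matrix (Fin n) (Fin k) 𝕜) : Matrix (Fin n) (Fin n) 𝕜 :=
  A * Ω * pinv (Ωᴴ * A * Ω) * Ωᴴ * A

/-- The `i`-th singular value of a square matrix, 0-indexed and listed in weakly
decreasing order (so `sval M 0 = σ₁(M)`), with `sval M i = 0` for `i ≥ n`. -/
noncomputable def sval {n : ℕ} (M : Matrix (Fin n) (Fin n) 𝕜) (i : ℕ) : ℝ :=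
  if h : i < n then
    Real.sqrt
      ((Matrix.posSemidef_conjTranspose_mul_self M).1.eigenvalues
        (Tuple.sort (Matrix.posSemidef_conjTranspose_mul_self M).1.eigenvalues
          (Fin.rev ⟨i, h⟩)))
  else 0

/-- The Schatten `p`-norm: the `ℓ_p` norm of the vector of singular values. -/
noncomputable def schatten {n : ℕ} (p : ℝ≥0∞) (M : Matrix (Fin n) (Fin n) 𝕜) : ℝ :=
  if p = ∞ then sval M 0
  else (∑ i ∈ Finset.range n, sval M i ^ p.toReal) ^ (1 / p.toReal)

/-- `σ_{r+1}^{(p)}(M)`, the optimal rank-`r` approximation error of `M` in the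
Schatten `p`-norm: `(Σ_{i > r} σ_i(M)^p)^{1/p}` (for `p = ∞`, `σ_{r+1}(M)`). -/
noncomputable def tailNorm {n : ℕ} (p : ℝ≥0∞) (M : Matrix (Fin n) (Fin n) 𝕜)
    (r : ℕ) : ℝ :=
  if p = ∞ then sval M r
  else (∑ i ∈ Finset.Ico r n, sval M i ^ p.toReal) ^ (1 / p.toReal)

/-- `B` is a (simultaneous) best rank-`r` approximation of `M` with respect to every
Schatten `p`-norm; this is the defining property of an `r`-truncated SVD `⟦M⟧_r`. -/
def IsBestRankApprox {n : ℕ} (M B : Matrix (Fin n) (Fin n) 𝕜) (r : ℕ) : Prop :=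
  B.rank ≤ r ∧
    ∀ p : ℝ≥0∞, 1 ≤ p → ∀ C : Matrix (Fin n) (Fin n) 𝕜, C.rank ≤ r →
      schatten p (M - B) ≤ schatten p (M - C)

/-- `⟦M⟧_r`: a best rank-`r` approximation of `M` (an `r`-truncated SVD). -/
noncomputable def truncate {n : ℕ} (M : Matrix (Fin n) (Fin n) 𝕜) (r : ℕ) :
    Matrix (Fin n) (Fin n) 𝕜 :=
  if h : ∃ B, IsBestRankApprox M B r then h.choose else 0

/-- The distribution of an `n × k` random matrix with independent standard normal
entries (matrices identified with functions `Fin n → Fin k → ℝ`). -/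
noncomputable def gaussianEnsemble (n k : ℕ) : Measure (Fin n → Fin k → ℝ) :=
  Measure.pi fun _ => Measure.pi fun _ => gaussianReal 0 1

/-
Write `A = CᴴC`. The Nyström residual is `Cᴴ (1 - P) C` with `P` the projection onto the columns of
`CΩ`, so the square root of its norm is at most `‖C - C Ω X‖` for every `X`: the Nyström error is
the error of a randomized range finder for `C = A^{1/2}`. Splitting `C` along its first `ϱ`
eigenvectors `V₁` and the remaining ones `V₂`, and taking for `X` a regularized right inverse of the
`ϱ × k` Gaussian matrix `G = V₁ᵀ Ω`, bounds this error by `‖S₂‖ + ‖S₂ H T‖` up to a regularization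
error, where `S₂` is the tail of `C`, `H = V₂ᵀ Ω` is a Gaussian matrix independent of `G`, and
`T = Gᵀ (G Gᵀ + ε)⁻¹`. Chevet's inequality, obtained from the Sudakov–Fernique comparison, gives
`E_H ‖S₂ H T‖ ≤ ‖S₂‖ ‖T‖_F + ‖S₂‖_F ‖T‖`. Gaussian integration by parts gives
`E tr (G Gᵀ + ε)⁻¹ ≤ ϱ / (k - ϱ - 1)` and bounds on the moments of order up to `k - ϱ` of `‖T‖`,
whence `E ‖T‖ ≤ e √k / (k - ϱ)`. All bounds are uniform in `ε`, and keeping `ε > 0` until the end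
makes every function of the Gaussian matrices continuous of polynomial growth, hence integrable.
-/

section PolynomialGrowth

variable {E F G : Type*} [NormedAddCommGroup E] [NormedAddCommGroup F] [NormedAddCommGroup G]

/-- Continuous functions whose norm is dominated by a power of `1 + ‖x‖`; they are the functions
whose Gaussian integrals are taken below, all of them convergent. -/
@[fun_prop]
def HasPolynomialGrowth (f : E → F) : Prop :=
  Continuous f ∧ ∃ (C : ℝ) (n : ℕ), ∀ x, ‖f x‖ ≤ C * (1 + ‖x‖) ^ n

namespace HasPolynomialGrowth

@[fun_prop]
lemma id : HasPolynomialGrowth fun x : E => x :=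
  ⟨continuous_id, 1, 1, fun x => by linarith⟩

@[fun_prop]
lemma const (c : F) : HasPolynomialGrowth fun _ : E => c :=
  ⟨continuous_const, ‖c‖, 0, fun x => by simp⟩

lemma exists_nonneg_bound {f : E → F} (hf : HasPolynomialGrowth f) :
    ∃ C ≥ (0 : ℝ), ∃ n : ℕ, ∀ x, ‖f x‖ ≤ C * (1 + ‖x‖) ^ n := by
  obtain ⟨-, C, n, h⟩ := hf
  exact ⟨|C|, abs_nonneg C, n, fun x => (h x).trans (by gcongr; exact le_abs_self C)⟩

lemma mono {f : E → F} {g : E → G} (hf : Continuous f) (hg : HasPolynomialGrowth g)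
    (h : ∀ x, ‖f x‖ ≤ ‖g x‖) : HasPolynomialGrowth f :=
  let ⟨_, C, n, hC⟩ := hg
  ⟨hf, C, n, fun x => (h x).trans (hC x)⟩

@[fun_prop]
lemma comp {g : F → G} {f : E → F} (hg : HasPolynomialGrowth g) (hf : HasPolynomialGrowth f) :
    HasPolynomialGrowth fun x => g (f x) := by
  obtain ⟨C, _, n, hC⟩ := hf.exists_nonneg_bound
  obtain ⟨D, hD0, m, hD⟩ := hg.exists_nonneg_bound
  refine ⟨hg.1.comp hf.1, D * (1 + C) ^ m, n * m, fun x => (hD _).trans ?_⟩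
  have hx : 1 + ‖f x‖ ≤ (1 + C) * (1 + ‖x‖) ^ n := by
    have := one_le_pow₀ (n := n) (le_add_of_nonneg_right (norm_nonneg x) : (1 : ℝ) ≤ 1 + ‖x‖)
    linarith [hC x]
  calc D * (1 + ‖f x‖) ^ m ≤ D * ((1 + C) * (1 + ‖x‖) ^ n) ^ m := by gcongr
    _ = D * (1 + C) ^ m * (1 + ‖x‖) ^ (n * m) := by rw [mul_pow, ← pow_mul, mul_assoc]

@[fun_prop]
lemma pi {ι : Type*} [Fintype ι] {f : E → ι → F}
    (hf : ∀ i, HasPolynomialGrowth fun x => f x i) : HasPolynomialGrowth fun x i => f x i := by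
  choose C hC0 n hC using fun i => (hf i).exists_nonneg_bound
  have hC' : ∀ i x, ‖f x i‖ ≤ (∑ j, C j) * (1 + ‖x‖) ^ ∑ j, n j := fun i x => by
    refine (hC i x).trans ?_
    have hx : 1 ≤ 1 + ‖x‖ := le_add_of_nonneg_right (norm_nonneg x)
    gcongr
    · exact Finset.sum_nonneg fun j _ => hC0 j
    · exact Finset.single_le_sum (fun j _ => hC0 j) (Finset.mem_univ i)
    · exact Finset.single_le_sum (fun j _ => Nat.zero_le (n j)) (Finset.mem_univ i)
  refine ⟨continuous_pi fun i => (hf i).1, ∑ j, C j, ∑ j, n j, fun x => ?_⟩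
  exact (pi_norm_le_iff_of_nonneg (mul_nonneg (Finset.sum_nonneg fun j _ => hC0 j)
    (by positivity))).2 fun i => hC' i x

@[fun_prop]
lemma apply {ι : Type*} [Fintype ι] (i : ι) : HasPolynomialGrowth fun x : ι → F => x i :=
  mono (continuous_apply i) id fun x => norm_le_pi_norm x i

@[fun_prop]
lemma fst : HasPolynomialGrowth fun x : E × F => x.1 :=
  mono continuous_fst id norm_fst_le

@[fun_prop]
lemma snd : HasPolynomialGrowth fun x : E × F => x.2 :=
  mono continuous_snd id norm_snd_le

@[fun_prop]
lemma add {f g : E → F} (hf : HasPolynomialGrowth f) (hg : HasPolynomialGrowth g) :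
    HasPolynomialGrowth fun x => f x + g x := by
  obtain ⟨C, hC0, n, hC⟩ := hf.exists_nonneg_bound
  obtain ⟨D, hD0, m, hD⟩ := hg.exists_nonneg_bound
  refine ⟨hf.1.add hg.1, C + D, n + m, fun x => (norm_add_le _ _).trans ?_⟩
  have hx : 1 ≤ 1 + ‖x‖ := le_add_of_nonneg_right (norm_nonneg x)
  calc ‖f x‖ + ‖g x‖ ≤ C * (1 + ‖x‖) ^ n + D * (1 + ‖x‖) ^ m := add_le_add (hC x) (hD x)
    _ ≤ C * (1 + ‖x‖) ^ (n + m) + D * (1 + ‖x‖) ^ (n + m) := by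
      gcongr <;> first | exact hx | omega
    _ = (C + D) * (1 + ‖x‖) ^ (n + m) := by ring

@[fun_prop]
lemma neg {f : E → F} (hf : HasPolynomialGrowth f) : HasPolynomialGrowth fun x => -f x :=
  mono hf.1.neg hf fun x => (norm_neg (f x)).le

@[fun_prop]
lemma sub {f g : E → F} (hf : HasPolynomialGrowth f) (hg : HasPolynomialGrowth g) :
    HasPolynomialGrowth fun x => f x - g x := by
  simpa only [sub_eq_add_neg] using hf.add hg.neg

@[fun_prop]
lemma sum {ι : Type*} {s : Finset ι} {f : ι → E → F} (hf : ∀ i, HasPolynomialGrowth (f i)) :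
    HasPolynomialGrowth fun x => ∑ i ∈ s, f i x := by
  induction s using Finset.induction_on with
  | empty => simpa using const 0
  | insert i s hi ih => simpa only [Finset.sum_insert hi] using (hf i).add ih

@[fun_prop]
lemma smul [NormedSpace ℝ F] {f : E → ℝ} {g : E → F} (hf : HasPolynomialGrowth f)
    (hg : HasPolynomialGrowth g) : HasPolynomialGrowth fun x => f x • g x := by
  obtain ⟨C, hC0, n, hC⟩ := hf.exists_nonneg_bound
  obtain ⟨D, _, m, hD⟩ := hg.exists_nonneg_bound
  refine ⟨hf.1.smul hg.1, C * D, n + m, fun x => ?_⟩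
  calc ‖f x • g x‖ = ‖f x‖ * ‖g x‖ := norm_smul _ _
    _ ≤ (C * (1 + ‖x‖) ^ n) * (D * (1 + ‖x‖) ^ m) := by gcongr; exacts [hC x, hD x]
    _ = C * D * (1 + ‖x‖) ^ (n + m) := by ring

@[fun_prop]
lemma mul {f g : E → ℝ} (hf : HasPolynomialGrowth f) (hg : HasPolynomialGrowth g) :
    HasPolynomialGrowth fun x => f x * g x :=
  hf.smul hg

@[fun_prop]
lemma pow {f : E → ℝ} (hf : HasPolynomialGrowth f) (m : ℕ) :
    HasPolynomialGrowth fun x => f x ^ m := by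
  induction m with
  | zero => simpa using const (1 : ℝ)
  | succ m ih => simpa only [pow_succ] using ih.mul hf

@[fun_prop]
lemma abs {f : E → ℝ} (hf : HasPolynomialGrowth f) : HasPolynomialGrowth fun x => |f x| :=
  mono hf.1.abs hf fun x => (norm_abs_eq_norm (f x)).le

@[fun_prop]
lemma sqrt {f : E → ℝ} (hf : HasPolynomialGrowth f) : HasPolynomialGrowth fun x => √(f x) := by
  refine mono hf.1.sqrt ((const (1 : ℝ)).add hf.abs) fun x => ?_
  rw [Real.norm_of_nonneg (Real.sqrt_nonneg _), Real.norm_of_nonneg (by positivity)]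
  refine (Real.sqrt_le_sqrt (le_abs_self _)).trans (Real.sqrt_le_iff.2 ⟨by positivity, ?_⟩)
  nlinarith [abs_nonneg (f x)]

@[fun_prop]
lemma dotProduct {ι : Type*} [Fintype ι] {u v : E → ι → ℝ} (hu : HasPolynomialGrowth u)
    (hv : HasPolynomialGrowth v) : HasPolynomialGrowth fun x => u x ⬝ᵥ v x := by
  unfold _root_.dotProduct
  fun_prop

@[fun_prop]
lemma mulVec {ι κ : Type*} [Fintype ι] [Fintype κ] {A : E → Matrix ι κ ℝ} {v : E → κ → ℝ}
    (hA : ∀ i j, HasPolynomialGrowth fun x => A x i j) (hv : HasPolynomialGrowth v) :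
    HasPolynomialGrowth fun x => A x *ᵥ v x := by
  unfold Matrix.mulVec
  fun_prop

variable [NormedSpace ℝ E] [MeasurableSpace E] [BorelSpace E] [CompleteSpace E]
  [SecondCountableTopology E] {μ : Measure E} [IsGaussian μ] {f : E → ℝ}

lemma integrable (hf : HasPolynomialGrowth f) : Integrable f μ := by
  obtain ⟨hc, C, n, hC⟩ := hf
  have hLp : MemLp (fun x : E => 1 + ‖x‖) n μ := by
    have hid : MemLp (fun x : E => x) n μ := IsGaussian.memLp_id μ n (ENNReal.natCast_ne_top n)
    have hone : MemLp (fun _ : E => (1 : ℝ)) n μ := memLp_const 1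
    exact hone.add hid.norm
  refine (hLp.integrable_norm_pow'.const_mul C).mono' hc.aestronglyMeasurable
    (.of_forall fun x => ?_)
  rw [Real.norm_of_nonneg (add_nonneg zero_le_one (norm_nonneg x))]
  exact hC x

end HasPolynomialGrowth

end PolynomialGrowth

section StdGaussian

variable {ι κ : Type*} [Fintype ι] [Fintype κ]

/-- The standard Gaussian law on `ι → ℝ`. A Gaussian `ι × κ` matrix is encoded by its family of
entries, that is, by a sample of `stdGaussianPi (ι × κ)`. -/
noncomputable def stdGaussianPi (ι : Type*) [Fintype ι] : Measure (ι → ℝ) :=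
  Measure.pi fun _ => gaussianReal 0 1

instance : IsProbabilityMeasure (stdGaussianPi ι) := by
  unfold stdGaussianPi
  infer_instance

instance : IsGaussian (stdGaussianPi ι) := by
  have h : (stdGaussian (EuclideanSpace ℝ ι)).map (EuclideanSpace.equiv ι ℝ) = stdGaussianPi ι := by
    rw [← map_pi_eq_stdGaussian, Measure.map_map (by fun_prop) (by fun_prop)]
    exact Measure.map_id
  exact h ▸ isGaussian_map_equiv _

lemma charFunDual_gaussianReal_zero_one (L : StrongDual ℝ ℝ) :
    charFunDual (gaussianReal 0 1) L = Complex.exp (-(L 1 ^ 2 : ℝ) / 2) := by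
  have hL : ∀ x, Complex.exp (L x * Complex.I) = Complex.exp (L 1 * x * Complex.I) := fun x => by
    rw [← Complex.ofReal_mul, mul_comm (L 1) x, ← smul_eq_mul x, ← map_smul, smul_eq_mul, mul_one]
  simp_rw [charFunDual_apply, hL]
  rw [← charFun_apply_real, charFun_gaussianReal]
  push_cast
  ring_nf

lemma charFunDual_stdGaussianPi {L : StrongDual ℝ (ι → ℝ)} {w : ι → ℝ} (hL : ∀ x, L x = w ⬝ᵥ x) :
    charFunDual (stdGaussianPi ι) L = Complex.exp (-(w ⬝ᵥ w : ℝ) / 2) := by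
  classical
  rw [stdGaussianPi, charFunDual_pi]
  have hi : ∀ i, L.comp (.single ℝ _ i) 1 = w i := fun i => by simp [hL]
  simp_rw [charFunDual_gaussianReal_zero_one, hi, ← Complex.exp_sum]
  simp [dotProduct, Finset.sum_div, Finset.sum_neg_distrib, neg_div, sq]

lemma measurePreserving_mulVec_stdGaussianPi [DecidableEq κ] {Q : Matrix κ ι ℝ} (hQ : Q * Qᵀ = 1) :
    MeasurePreserving (Q *ᵥ ·) (stdGaussianPi ι) (stdGaussianPi κ) := by
  let T : (ι → ℝ) →L[ℝ] (κ → ℝ) := LinearMap.toContinuousLinearMap Q.mulVecLin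
  refine ⟨T.measurable, Measure.ext_of_charFunDual (funext fun L => ?_)⟩
  let w : κ → ℝ := fun i => L (Pi.single i 1)
  have hL : ∀ y, L y = w ⬝ᵥ y := fun y => by
    conv_lhs => rw [pi_eq_sum_univ' y, map_sum]
    simp [w, dotProduct, mul_comm]
  have hLT : ∀ x, L.comp T x = (w ᵥ* Q) ⬝ᵥ x := fun x => by
    rw [← dotProduct_mulVec, ← hL]
    rfl
  have hw : (w ᵥ* Q) ⬝ᵥ (w ᵥ* Q) = w ⬝ᵥ w := by
    rw [← dotProduct_mulVec, ← mulVec_transpose, mulVec_mulVec, hQ, one_mulVec]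
  exact (charFunDual_map T L).trans <| by
    rw [charFunDual_stdGaussianPi hLT, charFunDual_stdGaussianPi hL, hw]

lemma measurePreserving_elim_stdGaussianPi :
    MeasurePreserving (fun x : (ι → ℝ) × (κ → ℝ) => Sum.elim x.1 x.2)
      ((stdGaussianPi ι).prod (stdGaussianPi κ)) (stdGaussianPi (ι ⊕ κ)) :=
  measurePreserving_sumPiEquivProdPi_symm fun _ : ι ⊕ κ => gaussianReal 0 1

lemma sub_vecMulVec_self_mul_transpose [DecidableEq ι] {u : ι → ℝ} (hu : u ⬝ᵥ u = 1) :
    (1 - vecMulVec u u) * (1 - vecMulVec u u)ᵀ = 1 - vecMulVec u u := by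
  simp [sub_mul, mul_sub, transpose_vecMulVec, vecMulVec_mul_vecMulVec, hu]

lemma measurePreserving_smul_add_stdGaussianPi [DecidableEq ι] {u : ι → ℝ} (hu : u ⬝ᵥ u = 1) :
    MeasurePreserving (fun x : ℝ × (ι → ℝ) => x.1 • u + (1 - vecMulVec u u) *ᵥ x.2)
      ((gaussianReal 0 1).prod (stdGaussianPi ι)) (stdGaussianPi ι) := by
  let Q : Matrix ι (Unit ⊕ ι) ℝ := fromCols (replicateCol Unit u) (1 - vecMulVec u u)
  have hQ : Q * Qᵀ = 1 := by
    rw [transpose_fromCols, fromCols_mul_fromRows, sub_vecMulVec_self_mul_transpose hu,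
      transpose_replicateCol, ← vecMulVec_eq, add_sub_cancel]
  have h := (measurePreserving_mulVec_stdGaussianPi hQ).comp <|
    measurePreserving_elim_stdGaussianPi.comp <|
      (measurePreserving_funUnique (gaussianReal 0 1) Unit).symm.prod (.id (stdGaussianPi ι))
  convert h using 1
  ext x i
  simp [Q, fromCols_mulVec, mulVec, dotProduct, mul_comm]

lemma hasDerivAt_gaussianPDFReal_zero_one (x : ℝ) :
    HasDerivAt (gaussianPDFReal 0 1) (-x * gaussianPDFReal 0 1 x) x := by
  rw [gaussianPDFReal_def]
  have hexp : HasDerivAt (fun y : ℝ => -(y - 0) ^ 2 / (2 * (1 : ℝ≥0))) (-x) x := by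
    refine ((((hasDerivAt_id x).sub_const 0).pow 2).neg.div_const _).congr_deriv ?_
    simp
    ring
  exact (hexp.exp.const_mul _).congr_deriv (by ring)

lemma integrable_mul_gaussianPDFReal {f : ℝ → ℝ} (hf : Integrable f (gaussianReal 0 1)) :
    Integrable fun x => f x * gaussianPDFReal 0 1 x := by
  rw [gaussianReal_of_var_ne_zero 0 one_ne_zero,
    integrable_withDensity_iff (measurable_gaussianPDF 0 1) (by simp [gaussianPDF_lt_top])] at hf
  simpa only [toReal_gaussianPDF] using hf

lemma integral_comp_of_measurePreserving {α β : Type*} [MeasurableSpace α] [MeasurableSpace β]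
    {μ : Measure α} {ν : Measure β} {φ : α → β} (hφ : MeasurePreserving φ μ ν) {f : β → ℝ}
    (hf : AEStronglyMeasurable f ν) : ∫ x, f (φ x) ∂μ = ∫ y, f y ∂ν := by
  rw [← hφ.map_eq] at hf ⊢
  exact (integral_map hφ.aemeasurable hf).symm

lemma stein_gaussianReal {f f' : ℝ → ℝ} (hf : ∀ x, HasDerivAt f (f' x) x)
    (h : HasPolynomialGrowth f) (h' : HasPolynomialGrowth f') :
    ∫ x, x * f x ∂(gaussianReal 0 1) = ∫ x, f' x ∂(gaussianReal 0 1) := by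
  have hxf : HasPolynomialGrowth fun x => -x * f x := by fun_prop
  have hparts := integral_mul_deriv_eq_deriv_mul_of_integrable (fun x _ => hf x)
    (fun x _ => hasDerivAt_gaussianPDFReal_zero_one x)
    ((integrable_mul_gaussianPDFReal hxf.integrable).congr (.of_forall fun x => by simp; ring))
    (integrable_mul_gaussianPDFReal h'.integrable) (integrable_mul_gaussianPDFReal h.integrable)
  simp_rw [integral_gaussianReal_eq_integral_smul one_ne_zero, smul_eq_mul]
  calc ∫ x, gaussianPDFReal 0 1 x * (x * f x)
      = -∫ x, f x * (-x * gaussianPDFReal 0 1 x) := by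
        rw [← integral_neg]
        exact integral_congr_ae (.of_forall fun x => by simp only; ring)
    _ = ∫ x, gaussianPDFReal 0 1 x * f' x := by
        rw [hparts, neg_neg]
        simp_rw [mul_comm]

lemma stein_stdGaussianPi_of_dotProduct_self_eq_one {u : ι → ℝ} (hu : u ⬝ᵥ u = 1)
    {f f' : (ι → ℝ) → ℝ} (hf : ∀ x, HasLineDerivAt ℝ f (f' x) x u)
    (h : HasPolynomialGrowth f) (h' : HasPolynomialGrowth f') :
    ∫ x, (u ⬝ᵥ x) * f x ∂(stdGaussianPi ι) = ∫ x, f' x ∂(stdGaussianPi ι) := by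
  classical
  have hmp := measurePreserving_smul_add_stdGaussianPi hu
  have hdisint {F : (ι → ℝ) → ℝ} (hF : HasPolynomialGrowth F) :
      ∫ x, F x ∂(stdGaussianPi ι) = ∫ y, ∫ s, F (s • u + (1 - vecMulVec u u) *ᵥ y)
        ∂(gaussianReal 0 1) ∂(stdGaussianPi ι) := by
    rw [← integral_comp_of_measurePreserving hmp hF.1.aestronglyMeasurable]
    refine integral_prod_symm _ (HasPolynomialGrowth.integrable ?_)
    fun_prop
  have hline : ∀ y s, u ⬝ᵥ (s • u + (1 - vecMulVec u u) *ᵥ y) = s := fun y s => by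
    simp [sub_mulVec, vecMulVec_mulVec, hu]
  rw [hdisint (by fun_prop), hdisint h']
  refine integral_congr_ae (.of_forall fun y => ?_)
  simp only [hline]
  refine stein_gaussianReal (fun s => ?_) (by fun_prop) (by fun_prop)
  have hs : HasDerivAt (fun t => f (s • u + (1 - vecMulVec u u) *ᵥ y + t • u))
      (f' (s • u + (1 - vecMulVec u u) *ᵥ y)) (s - s) := by
    rw [sub_self]
    exact hf _
  refine (hs.comp_sub_const s s).congr_of_eventuallyEq (.of_forall fun r => congrArg f ?_)
  module

theorem stein_stdGaussianPi {v : ι → ℝ} {f f' : (ι → ℝ) → ℝ}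
    (hf : ∀ x, HasLineDerivAt ℝ f (f' x) x v)
    (h : HasPolynomialGrowth f) (h' : HasPolynomialGrowth f') :
    ∫ x, (v ⬝ᵥ x) * f x ∂(stdGaussianPi ι) = ∫ x, f' x ∂(stdGaussianPi ι) := by
  rcases eq_or_ne v 0 with rfl | hv
  · have hf' : ∀ x, f' x = 0 := fun x => (hf x).unique (hasLineDerivAt_zero)
    simp [hf']
  set c := √(v ⬝ᵥ v)
  have hvv : 0 < v ⬝ᵥ v := by
    simpa using dotProduct_star_self_pos_iff.2 hv
  have hcc : c * c = v ⬝ᵥ v := Real.mul_self_sqrt hvv.le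
  have hc : c ≠ 0 := (Real.sqrt_pos.2 hvv).ne'
  have hunit : (c⁻¹ • v) ⬝ᵥ (c⁻¹ • v) = 1 := by
    rw [smul_dotProduct, dotProduct_smul, smul_eq_mul, smul_eq_mul, ← hcc]
    field_simp
  have hstein := stein_stdGaussianPi_of_dotProduct_self_eq_one hunit
    (fun x => (hf x).smul c⁻¹) h (by fun_prop)
  simp_rw [smul_dotProduct, smul_eq_mul, mul_assoc, integral_const_mul] at hstein
  exact mul_left_cancel₀ (inv_ne_zero hc) hstein

end StdGaussian

section LogSumExp

lemma sub_dotProduct_sub_self {N J : Type*} [Fintype J] (X : Matrix N J ℝ) (i j : N) :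
    (X i - X j) ⬝ᵥ (X i - X j) =
      (X * Xᵀ) i i + (X * Xᵀ) j j - (X * Xᵀ) i j - (X * Xᵀ) j i := by
  have hgram (a b : N) : (X * Xᵀ) a b = X a ⬝ᵥ X b := rfl
  simp only [hgram, sub_dotProduct, dotProduct_sub]
  ring

variable {N J : Type*} [Fintype N] [Fintype J]

/-- The log-sum-exp function, the smooth surrogate for the maximum of finitely many variables. -/
noncomputable def logSumExp (z : N → ℝ) : ℝ := Real.log (∑ i, Real.exp (z i))

/-- The softmax weights, that is, the gradient of `logSumExp`. -/
noncomputable def softmax (z : N → ℝ) (i : N) : ℝ := Real.exp (z i) / ∑ j, Real.exp (z j)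

lemma softmax_nonneg (z : N → ℝ) (i : N) : 0 ≤ softmax z i :=
  div_nonneg (Real.exp_nonneg _) (Finset.sum_nonneg fun _ _ => Real.exp_nonneg _)

lemma exp_le_sum_exp (z : N → ℝ) (i : N) : Real.exp (z i) ≤ ∑ j, Real.exp (z j) :=
  Finset.single_le_sum (f := fun j => Real.exp (z j)) (fun _ _ => Real.exp_nonneg _)
    (Finset.mem_univ i)

lemma hasDerivAt_sum_exp {z : ℝ → N → ℝ} {z' : N → ℝ} {t : ℝ} (hz : HasDerivAt z z' t) :
    HasDerivAt (fun t => ∑ i, Real.exp (z t i)) (∑ i, Real.exp (z t i) * z' i) t :=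
  HasDerivAt.fun_sum fun i _ => (hasDerivAt_pi.1 hz i).exp

lemma sum_mul_sub_sum_mul {p : N → ℝ} (hp : ∑ i, p i = 1) (D : Matrix N N ℝ) :
    ∑ i, p i * (D i i - ∑ j, p j * D j i) =
      2⁻¹ * ∑ i, ∑ j, p i * p j * (D i i + D j j - D i j - D j i) := by
  have hleft : ∑ i, ∑ j, p i * p j * D i i = ∑ i, p i * D i i :=
    Finset.sum_congr rfl fun i _ => by rw [← Finset.sum_mul, ← Finset.mul_sum, hp, mul_one]
  have hright : ∑ i, ∑ j, p i * p j * D j j = ∑ i, p i * D i i := by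
    rw [Finset.sum_comm, ← hleft]
    exact Finset.sum_congr rfl fun i _ => Finset.sum_congr rfl fun j _ => by ring
  have hswap : ∑ i, ∑ j, p i * p j * D j i = ∑ i, ∑ j, p i * p j * D i j := by
    rw [Finset.sum_comm]
    exact Finset.sum_congr rfl fun i _ => Finset.sum_congr rfl fun j _ => by ring
  have hmul : ∑ i, p i * ∑ j, p j * D j i = ∑ i, ∑ j, p i * p j * D i j := by
    simp only [Finset.mul_sum, ← mul_assoc, hswap]
  simp only [mul_sub, mul_add, Finset.sum_sub_distrib, Finset.sum_add_distrib, hleft, hright,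
    hmul, hswap]
  ring

variable [Nonempty N]

lemma sum_exp_pos (z : N → ℝ) : 0 < ∑ i, Real.exp (z i) :=
  Finset.sum_pos (fun _ _ => Real.exp_pos _) Finset.univ_nonempty

lemma sum_softmax (z : N → ℝ) : ∑ i, softmax z i = 1 := by
  simp_rw [softmax, ← Finset.sum_div, div_self (sum_exp_pos z).ne']

lemma softmax_le_one (z : N → ℝ) (i : N) : softmax z i ≤ 1 :=
  div_le_one_of_le₀ (exp_le_sum_exp z i) (sum_exp_pos z).le

lemma le_logSumExp (z : N → ℝ) (i : N) : z i ≤ logSumExp z :=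
  (Real.le_log_iff_exp_le (sum_exp_pos z)).2 (exp_le_sum_exp z i)

lemma logSumExp_le {z : N → ℝ} {c : ℝ} (h : ∀ i, z i ≤ c) :
    logSumExp z ≤ Real.log (Fintype.card N) + c := by
  rw [logSumExp, Real.log_le_iff_le_exp (sum_exp_pos z), Real.exp_add,
    Real.exp_log (Nat.cast_pos.2 Fintype.card_pos)]
  calc ∑ i, Real.exp (z i) ≤ ∑ _i : N, Real.exp c :=
        Finset.sum_le_sum fun i _ => Real.exp_le_exp.2 (h i)
    _ = Fintype.card N * Real.exp c := by simp

lemma abs_logSumExp_le (z : N → ℝ) :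
    |logSumExp z| ≤ Real.log (Fintype.card N) + ‖z‖ := by
  obtain ⟨i⟩ := ‹Nonempty N›
  have hi : |z i| ≤ ‖z‖ := norm_le_pi_norm z i
  have : Nonempty N := ⟨i⟩
  have hlog : 0 ≤ Real.log (Fintype.card N) := Real.log_natCast_nonneg _
  refine abs_le.2 ⟨?_, logSumExp_le fun j => (le_abs_self _).trans (norm_le_pi_norm z j)⟩
  linarith [le_logSumExp z i, neg_abs_le (z i)]

@[fun_prop]
lemma hasPolynomialGrowth_logSumExp : HasPolynomialGrowth (logSumExp : (N → ℝ) → ℝ) := by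
  have hcont : Continuous (logSumExp : (N → ℝ) → ℝ) := by
    unfold logSumExp
    exact Continuous.log (by fun_prop) fun z => (sum_exp_pos z).ne'
  refine ⟨hcont, Real.log (Fintype.card N) + 1, 1, fun z => (abs_logSumExp_le z).trans ?_⟩
  have hlog : 0 ≤ Real.log (Fintype.card N) := Real.log_natCast_nonneg _
  nlinarith [norm_nonneg z]

@[fun_prop]
lemma hasPolynomialGrowth_softmax (i : N) :
    HasPolynomialGrowth fun z : N → ℝ => softmax z i := by
  have hcont : Continuous fun z : N → ℝ => softmax z i := by
    unfold softmax
    exact Continuous.div (by fun_prop) (by fun_prop) fun z => (sum_exp_pos z).ne'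
  refine .mono hcont (.const (1 : ℝ)) fun z => ?_
  simpa [abs_of_nonneg (softmax_nonneg z i)] using softmax_le_one z i

lemma sum_exp_mul_eq (z z' : N → ℝ) :
    ∑ i, Real.exp (z i) * z' i = (∑ i, Real.exp (z i)) * (softmax z ⬝ᵥ z') := by
  simp_rw [dotProduct, softmax, Finset.mul_sum, ← mul_assoc,
    mul_div_cancel₀ _ (sum_exp_pos z).ne']

lemma hasDerivAt_logSumExp {z : ℝ → N → ℝ} {z' : N → ℝ} {t : ℝ} (hz : HasDerivAt z z' t) :
    HasDerivAt (fun t => logSumExp (z t)) (softmax (z t) ⬝ᵥ z') t := by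
  refine ((hasDerivAt_sum_exp hz).log (sum_exp_pos (z t)).ne').congr_deriv ?_
  rw [sum_exp_mul_eq, mul_div_cancel_left₀ _ (sum_exp_pos (z t)).ne']

lemma hasDerivAt_softmax {z : ℝ → N → ℝ} {z' : N → ℝ} {t : ℝ} (hz : HasDerivAt z z' t) (i : N) :
    HasDerivAt (fun t => softmax (z t) i)
      (softmax (z t) i * (z' i - softmax (z t) ⬝ᵥ z')) t := by
  have hpos := (sum_exp_pos (z t)).ne'
  refine ((hasDerivAt_pi.1 hz i).exp.div (hasDerivAt_sum_exp hz) hpos).congr_deriv ?_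
  rw [sum_exp_mul_eq, softmax]
  field_simp

lemma hasLineDerivAt_softmax_mulVec (Z : Matrix N J ℝ) (g v : J → ℝ) (i : N) :
    HasLineDerivAt ℝ (fun g => softmax (Z *ᵥ g) i)
      (softmax (Z *ᵥ g) i * ((Z *ᵥ v) i - softmax (Z *ᵥ g) ⬝ᵥ Z *ᵥ v)) g v := by
  have hz : HasDerivAt (fun t : ℝ => Z *ᵥ (g + t • v)) (Z *ᵥ v) 0 := by
    simp_rw [mulVec_add, mulVec_smul]
    simpa using ((hasDerivAt_id (0 : ℝ)).smul_const (Z *ᵥ v)).const_add (Z *ᵥ g)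
  simpa only [HasLineDerivAt, zero_smul, add_zero] using hasDerivAt_softmax hz i

lemma integral_softmax_dotProduct (Z Z' : Matrix N J ℝ) :
    ∫ g, softmax (Z *ᵥ g) ⬝ᵥ Z' *ᵥ g ∂(stdGaussianPi J) =
      ∫ g, ∑ i, softmax (Z *ᵥ g) i *
        ((Z * Z'ᵀ) i i - ∑ j, softmax (Z *ᵥ g) j * (Z * Z'ᵀ) j i) ∂(stdGaussianPi J) := by
  rw [integral_finsetSum _ fun i _ => HasPolynomialGrowth.integrable (by fun_prop)]
  simp_rw [dotProduct]
  rw [integral_finsetSum _ fun i _ => HasPolynomialGrowth.integrable (by fun_prop)]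
  refine Finset.sum_congr rfl fun i _ => ?_
  have hstein := stein_stdGaussianPi (fun g => hasLineDerivAt_softmax_mulVec Z g (Z' i) i)
    (by fun_prop) (by fun_prop)
  simpa only [mul_comm, mulVec, mul_apply, transpose_apply, dotProduct] using hstein

lemma abs_softmax_dotProduct_le (z z' : N → ℝ) : |softmax z ⬝ᵥ z'| ≤ ‖z'‖ :=
  calc |∑ i, softmax z i * z' i| ≤ ∑ i, softmax z i * ‖z'‖ := by
        refine (Finset.abs_sum_le_sum_abs _ _).trans (Finset.sum_le_sum fun i _ => ?_)
        rw [abs_mul, abs_of_nonneg (softmax_nonneg z i)]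
        exact mul_le_mul_of_nonneg_left (norm_le_pi_norm z' i) (softmax_nonneg z i)
    _ = ‖z'‖ := by rw [← Finset.sum_mul, sum_softmax, one_mul]

lemma hasDerivAt_integral_logSumExp (X Y : Matrix N J ℝ) (θ : ℝ) :
    HasDerivAt
      (fun θ => ∫ g, logSumExp ((Real.sin θ • X + Real.cos θ • Y) *ᵥ g) ∂(stdGaussianPi J))
      (∫ g, softmax ((Real.sin θ • X + Real.cos θ • Y) *ᵥ g) ⬝ᵥ
        (Real.cos θ • X - Real.sin θ • Y) *ᵥ g ∂(stdGaussianPi J)) θ := by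
  have hX : HasPolynomialGrowth fun g : J → ℝ => ‖X *ᵥ g‖ :=
    .mono (by fun_prop) (.mulVec (fun i j => .const (X i j)) .id) fun g => by simp
  have hY : HasPolynomialGrowth fun g : J → ℝ => ‖Y *ᵥ g‖ :=
    .mono (by fun_prop) (.mulVec (fun i j => .const (Y i j)) .id) fun g => by simp
  have hF (θ : ℝ) : HasPolynomialGrowth fun g =>
      logSumExp ((Real.sin θ • X + Real.cos θ • Y) *ᵥ g) := by fun_prop
  let F' (θ : ℝ) (g : J → ℝ) : ℝ := softmax ((Real.sin θ • X + Real.cos θ • Y) *ᵥ g) ⬝ᵥ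
    (Real.cos θ • X - Real.sin θ • Y) *ᵥ g
  have hF' : HasPolynomialGrowth (F' θ) := by fun_prop
  refine (hasDerivAt_integral_of_dominated_loc_of_deriv_le
    (F' := F') (bound := fun g => ‖X *ᵥ g‖ + ‖Y *ᵥ g‖) Filter.univ_mem
    (.of_forall fun θ => (hF θ).integrable.aestronglyMeasurable) (hF θ).integrable
    hF'.integrable.aestronglyMeasurable
    (.of_forall fun g θ _ => ?_) (hX.add hY).integrable (.of_forall fun g θ _ => ?_)).2
  · refine (abs_softmax_dotProduct_le _ _).trans ?_
    rw [sub_mulVec, smul_mulVec, smul_mulVec]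
    refine (norm_sub_le _ _).trans (add_le_add ?_ ?_) <;> rw [norm_smul]
    · exact mul_le_of_le_one_left (norm_nonneg _) (Real.abs_cos_le_one θ)
    · exact mul_le_of_le_one_left (norm_nonneg _) (Real.abs_sin_le_one θ)
  · apply hasDerivAt_logSumExp
    simp only [add_mulVec, smul_mulVec, sub_eq_add_neg, ← neg_smul]
    exact ((Real.hasDerivAt_sin θ).smul_const _).add ((Real.hasDerivAt_cos θ).smul_const _)

theorem integral_logSumExp_mulVec_le {X Y : Matrix N J ℝ} (hXY : X * Yᵀ = 0)
    (hinc : ∀ i j, (X i - X j) ⬝ᵥ (X i - X j) ≤ (Y i - Y j) ⬝ᵥ (Y i - Y j)) :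
    ∫ g, logSumExp (X *ᵥ g) ∂(stdGaussianPi J) ≤ ∫ g, logSumExp (Y *ᵥ g) ∂(stdGaussianPi J) := by
  set F := fun θ : ℝ =>
    ∫ g, logSumExp ((Real.sin θ • X + Real.cos θ • Y) *ᵥ g) ∂(stdGaussianPi J)
  have hYX : Y * Xᵀ = 0 := by rw [← transpose_inj, transpose_mul, transpose_transpose, hXY]; simp
  have hcov (θ : ℝ) : (Real.sin θ • X + Real.cos θ • Y) * (Real.cos θ • X - Real.sin θ • Y)ᵀ =
      (Real.sin θ * Real.cos θ) • (X * Xᵀ - Y * Yᵀ) := by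
    simp only [transpose_sub, transpose_smul, Matrix.add_mul, Matrix.mul_sub, Matrix.smul_mul,
      Matrix.mul_smul, smul_smul, hXY, hYX, smul_zero, add_zero, zero_add, smul_sub]
    rw [mul_comm (Real.cos θ)]
  have hderiv : ∀ θ ∈ interior (Set.Icc 0 (Real.pi / 2)), deriv F θ ≤ 0 := by
    intro θ hθ
    rw [interior_Icc] at hθ
    have hsc : 0 ≤ Real.sin θ * Real.cos θ := mul_nonneg
      (Real.sin_nonneg_of_mem_Icc ⟨hθ.1.le, by linarith [hθ.2, Real.pi_pos]⟩)
      (Real.cos_nonneg_of_mem_Icc ⟨by linarith [hθ.1, Real.pi_pos], hθ.2.le⟩)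
    rw [(hasDerivAt_integral_logSumExp X Y θ).deriv, integral_softmax_dotProduct]
    refine integral_nonpos fun g => ?_
    rw [Pi.zero_apply, sum_mul_sub_sum_mul (sum_softmax _), hcov]
    refine mul_nonpos_of_nonneg_of_nonpos (by norm_num)
      (Finset.sum_nonpos fun i _ => Finset.sum_nonpos fun j _ => mul_nonpos_of_nonneg_of_nonpos
        (mul_nonneg (softmax_nonneg _ i) (softmax_nonneg _ j)) ?_)
    have := hinc i j
    rw [sub_dotProduct_sub_self, sub_dotProduct_sub_self] at this
    simp only [Matrix.smul_apply, Matrix.sub_apply, smul_eq_mul]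
    nlinarith
  have hanti : AntitoneOn F (Set.Icc 0 (Real.pi / 2)) :=
    antitoneOn_of_deriv_nonpos (convex_Icc _ _)
      (fun θ _ => (hasDerivAt_integral_logSumExp X Y θ).continuousAt.continuousWithinAt)
      (fun θ _ => (hasDerivAt_integral_logSumExp X Y θ).differentiableAt.differentiableWithinAt)
      hderiv
  have hpi : (0 : ℝ) ≤ Real.pi / 2 := by positivity
  simpa [F] using hanti (Set.left_mem_Icc.2 hpi) (Set.right_mem_Icc.2 hpi) hpi

@[fun_prop]
lemma hasPolynomialGrowth_iSup : HasPolynomialGrowth fun z : N → ℝ => ⨆ i, z i := by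
  have hcont : Continuous fun z : N → ℝ => ⨆ i, z i := by
    simp_rw [← Finset.sup'_univ_eq_ciSup]
    exact Continuous.finset_sup'_apply _ fun i _ => continuous_apply i
  refine .mono hcont .id fun z => abs_le.2 ⟨?_, ciSup_le fun i => ?_⟩
  · obtain ⟨i⟩ := ‹Nonempty N›
    exact (neg_le_of_abs_le (norm_le_pi_norm z i)).trans
      (le_ciSup (Set.finite_range z).bddAbove i)
  · exact (le_abs_self _).trans (norm_le_pi_norm z i)

end LogSumExp

section SudakovFernique

variable {N J : Type*} [Finite N] [Nonempty N] [Fintype J]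

lemma integral_iSup_mulVec_le_of_mul_transpose_eq_zero {X Y : Matrix N J ℝ} (hXY : X * Yᵀ = 0)
    (hinc : ∀ i j, (X i - X j) ⬝ᵥ (X i - X j) ≤ (Y i - Y j) ⬝ᵥ (Y i - Y j)) :
    ∫ g, ⨆ i, (X *ᵥ g) i ∂(stdGaussianPi J) ≤ ∫ g, ⨆ i, (Y *ᵥ g) i ∂(stdGaussianPi J) := by
  cases nonempty_fintype N
  have hscaled (β : ℝ) (hβ : 0 < β) : β * ∫ g, ⨆ i, (X *ᵥ g) i ∂(stdGaussianPi J) ≤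
      Real.log (Fintype.card N) + β * ∫ g, ⨆ i, (Y *ᵥ g) i ∂(stdGaussianPi J) := by
    calc β * ∫ g, ⨆ i, (X *ᵥ g) i ∂(stdGaussianPi J)
        = ∫ g, β * ⨆ i, (X *ᵥ g) i ∂(stdGaussianPi J) := (integral_const_mul _ _).symm
      _ ≤ ∫ g, logSumExp ((β • X) *ᵥ g) ∂(stdGaussianPi J) := by
          refine integral_mono (HasPolynomialGrowth.integrable (by fun_prop))
            (HasPolynomialGrowth.integrable (by fun_prop)) fun g => ?_
          rw [Real.mul_iSup_of_nonneg hβ.le, smul_mulVec]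
          exact ciSup_le fun i => le_logSumExp (β • X *ᵥ g) i
      _ ≤ ∫ g, logSumExp ((β • Y) *ᵥ g) ∂(stdGaussianPi J) := by
          refine integral_logSumExp_mulVec_le (by simp [hXY]) fun i j => ?_
          have hsmul (Z : Matrix N J ℝ) : (β • Z) i - (β • Z) j = β • (Z i - Z j) :=
            (smul_sub β (Z i) (Z j)).symm
          simp only [hsmul, smul_dotProduct, dotProduct_smul]
          exact mul_le_mul_of_nonneg_left (mul_le_mul_of_nonneg_left (hinc i j) hβ.le) hβ.le
      _ ≤ ∫ g, (Real.log (Fintype.card N) + β * ⨆ i, (Y *ᵥ g) i) ∂(stdGaussianPi J) := by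
          refine integral_mono (HasPolynomialGrowth.integrable (by fun_prop))
            (HasPolynomialGrowth.integrable (by fun_prop)) fun g => logSumExp_le fun i => ?_
          rw [smul_mulVec]
          exact mul_le_mul_of_nonneg_left (le_ciSup (Set.finite_range _).bddAbove i) hβ.le
      _ = _ := by
          rw [integral_add (integrable_const _) (HasPolynomialGrowth.integrable (by fun_prop)),
            integral_const_mul]
          simp
  refine le_of_forall_pos_le_add fun ε hε => ?_
  have hβ : 0 < (Real.log (Fintype.card N) + 1) / ε := by positivity
  have := hscaled _ hβ
  refine le_of_mul_le_mul_left (this.trans ?_) hβ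
  rw [mul_add, div_mul_cancel₀ _ hε.ne']
  linarith

theorem sudakov_fernique {J' : Type*} [Fintype J'] {X : Matrix N J ℝ} {Y : Matrix N J' ℝ}
    (hinc : ∀ i j, (X i - X j) ⬝ᵥ (X i - X j) ≤ (Y i - Y j) ⬝ᵥ (Y i - Y j)) :
    ∫ g, ⨆ i, (X *ᵥ g) i ∂(stdGaussianPi J) ≤ ∫ g, ⨆ i, (Y *ᵥ g) i ∂(stdGaussianPi J') := by
  cases nonempty_fintype N
  -- The two processes only matter through their laws, so they may be taken independent.
  let P : Matrix J (J ⊕ J') ℝ := fromCols 1 0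
  let Q : Matrix J' (J ⊕ J') ℝ := fromCols 0 1
  have hP : P * Pᵀ = 1 := by simp [P, transpose_fromCols, fromCols_mul_fromRows]
  have hQ : Q * Qᵀ = 1 := by simp [Q, transpose_fromCols, fromCols_mul_fromRows]
  have hPQ : P * Qᵀ = 0 := by simp [P, Q, transpose_fromCols, fromCols_mul_fromRows]
  have hX : (X * P) * (X * P)ᵀ = X * Xᵀ := by
    rw [transpose_mul, Matrix.mul_assoc, ← Matrix.mul_assoc P, hP, Matrix.one_mul]
  have hY : (Y * Q) * (Y * Q)ᵀ = Y * Yᵀ := by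
    rw [transpose_mul, Matrix.mul_assoc, ← Matrix.mul_assoc Q, hQ, Matrix.one_mul]
  have hXY : (X * P) * (Y * Q)ᵀ = 0 := by
    rw [transpose_mul, Matrix.mul_assoc, ← Matrix.mul_assoc P, hPQ, Matrix.zero_mul,
      Matrix.mul_zero]
  have hle := integral_iSup_mulVec_le_of_mul_transpose_eq_zero hXY fun i j => by
    simpa only [sub_dotProduct_sub_self, hX, hY] using hinc i j
  simp only [← mulVec_mulVec] at hle
  rwa [integral_comp_of_measurePreserving (measurePreserving_mulVec_stdGaussianPi hP)
      (f := fun g => ⨆ i, (X *ᵥ g) i)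
      (HasPolynomialGrowth.integrable (by fun_prop)).aestronglyMeasurable,
    integral_comp_of_measurePreserving (measurePreserving_mulVec_stdGaussianPi hQ)
      (f := fun g => ⨆ i, (Y *ᵥ g) i)
      (HasPolynomialGrowth.integrable (by fun_prop)).aestronglyMeasurable] at hle

end SudakovFernique

section Moments

variable {ι κ : Type*} [Fintype ι] [Fintype κ]

lemma dotProduct_self_nonneg (v : ι → ℝ) : 0 ≤ v ⬝ᵥ v := dotProduct_self_star_nonneg v

lemma integral_sqrt_le {α : Type*} [MeasurableSpace α] {μ : Measure α} [IsProbabilityMeasure μ]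
    {f : α → ℝ} (hf : Integrable f μ) (hf0 : 0 ≤ f) : ∫ x, √(f x) ∂μ ≤ √(∫ x, f x ∂μ) := by
  have hsqrt : Integrable (fun x => √(f x)) μ :=
    (hf.add (integrable_const 1)).mono (Real.continuous_sqrt.comp_aestronglyMeasurable
      hf.aestronglyMeasurable) (.of_forall fun x => by
        have hx : 0 ≤ f x := hf0 x
        rw [Real.norm_of_nonneg (Real.sqrt_nonneg _)]
        exact (Real.sqrt_le_iff.2 ⟨by positivity, by nlinarith⟩ : √(f x) ≤ f x + 1).trans
          (le_abs_self _))
  exact Real.strictConcaveOn_sqrt.concaveOn.le_map_integral Real.continuous_sqrt.continuousOn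
    isClosed_Ici (.of_forall hf0) hf hsqrt

lemma hasDerivAt_add_smul {E : Type*} [NormedAddCommGroup E] [NormedSpace ℝ E] (x w : E) :
    HasDerivAt (fun t : ℝ => x + t • w) w 0 := by
  simpa using ((hasDerivAt_id (0 : ℝ)).smul_const w).const_add x

lemma hasDerivAt_dotProduct {u v : ℝ → ι → ℝ} {u' v' : ι → ℝ} {t : ℝ} (hu : HasDerivAt u u' t)
    (hv : HasDerivAt v v' t) :
    HasDerivAt (fun t => u t ⬝ᵥ v t) (u' ⬝ᵥ v t + u t ⬝ᵥ v') t := by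
  simp only [dotProduct, ← Finset.sum_add_distrib]
  exact HasDerivAt.fun_sum fun i _ => (hasDerivAt_pi.1 hu i).mul (hasDerivAt_pi.1 hv i)

theorem integral_dotProduct_pow_two_mul (v : ι → ℝ) (q : ℕ) :
    ∫ g, (v ⬝ᵥ g) ^ (2 * q) ∂(stdGaussianPi ι) =
      (∏ i ∈ Finset.range q, (2 * i + 1 : ℝ)) * (v ⬝ᵥ v) ^ q := by
  induction q with
  | zero => simp
  | succ q ih =>
    have hderiv (g : ι → ℝ) : HasLineDerivAt ℝ (fun g => (v ⬝ᵥ g) ^ (2 * q + 1))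
        ((2 * q + 1) * (v ⬝ᵥ v) * (v ⬝ᵥ g) ^ (2 * q)) g v :=
      ((hasDerivAt_dotProduct (hasDerivAt_const 0 v) (hasDerivAt_add_smul g v)).pow
        (2 * q + 1)).congr_deriv (by simp; ring)
    have hstein := stein_stdGaussianPi hderiv (by fun_prop) (by fun_prop)
    rw [integral_const_mul, ih] at hstein
    calc ∫ g, (v ⬝ᵥ g) ^ (2 * (q + 1)) ∂(stdGaussianPi ι)
        = ∫ g, (v ⬝ᵥ g) * (v ⬝ᵥ g) ^ (2 * q + 1) ∂(stdGaussianPi ι) :=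
          integral_congr_ae (.of_forall fun g => by ring)
      _ = _ := by
          rw [hstein, Finset.prod_range_succ]
          ring

lemma integral_mulVec_dotProduct_self (S : Matrix κ ι ℝ) :
    ∫ g, (S *ᵥ g) ⬝ᵥ (S *ᵥ g) ∂(stdGaussianPi ι) = ∑ i, ∑ j, S i j ^ 2 := by
  have hrow (i : κ) : ∫ g, (S *ᵥ g) i ^ 2 ∂(stdGaussianPi ι) = ∑ j, S i j ^ 2 := by
    simpa [mulVec, dotProduct, sq] using integral_dotProduct_pow_two_mul (S i) 1
  simp_rw [← hrow, dotProduct, ← sq]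
  exact integral_finsetSum _ fun i _ => HasPolynomialGrowth.integrable (by fun_prop)

theorem integral_dotProduct_self_pow (q : ℕ) :
    ∫ g, (g ⬝ᵥ g) ^ q ∂(stdGaussianPi ι) =
      ∏ i ∈ Finset.range q, (Fintype.card ι + 2 * i : ℝ) := by
  induction q with
  | zero => simp
  | succ q ih =>
    have hderiv (i : ι) (g : ι → ℝ) : HasLineDerivAt ℝ (fun g => g i * (g ⬝ᵥ g) ^ q)
        ((g ⬝ᵥ g) ^ q + g i * (q * (g ⬝ᵥ g) ^ (q - 1) * (2 * g i))) g (Pi.single i 1) := by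
      have hg := hasDerivAt_add_smul g (Pi.single i 1)
      refine ((hasDerivAt_pi.1 hg i).mul ((hasDerivAt_dotProduct hg hg).pow q)).congr_deriv ?_
      simp [two_mul]
    have hstein (i : ι) := stein_stdGaussianPi (hderiv i) (by fun_prop) (by fun_prop)
    simp only [single_dotProduct, one_mul] at hstein
    have hsum (g : ι → ℝ) :
        ∑ i, ((g ⬝ᵥ g) ^ q + g i * (q * (g ⬝ᵥ g) ^ (q - 1) * (2 * g i))) =
          (Fintype.card ι + 2 * q) * (g ⬝ᵥ g) ^ q := by
      have hpow : (q : ℝ) * (g ⬝ᵥ g) ^ (q - 1) * (g ⬝ᵥ g) = q * (g ⬝ᵥ g) ^ q := by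
        cases q <;> simp [pow_succ, mul_assoc]
      calc _ = Fintype.card ι * (g ⬝ᵥ g) ^ q + 2 * (q * (g ⬝ᵥ g) ^ (q - 1) * (g ⬝ᵥ g)) := by
            rw [Finset.sum_add_distrib, dotProduct, Finset.mul_sum, Finset.mul_sum]
            congr 1
            · simp
            · exact Finset.sum_congr rfl fun i _ => by ring
        _ = _ := by rw [hpow]; ring
    calc ∫ g, (g ⬝ᵥ g) ^ (q + 1) ∂(stdGaussianPi ι)
        = ∫ g, ∑ i, g i * (g i * (g ⬝ᵥ g) ^ q) ∂(stdGaussianPi ι) :=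
          integral_congr_ae (.of_forall fun g => by
            simp only [← mul_assoc, ← Finset.sum_mul, pow_succ']; rfl)
      _ = ∫ g, (Fintype.card ι + 2 * q) * (g ⬝ᵥ g) ^ q ∂(stdGaussianPi ι) := by
          simp only [← hsum]
          rw [integral_finsetSum _ fun i _ => HasPolynomialGrowth.integrable (by fun_prop),
            integral_finsetSum _ fun i _ => HasPolynomialGrowth.integrable (by fun_prop)]
          exact Finset.sum_congr rfl fun i _ => hstein i
      _ = _ := by rw [integral_const_mul, ih, Finset.prod_range_succ, mul_comm]

end Moments

section Chevet

open scoped Matrix.Norms.L2Operator RealInnerProductSpace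

lemma exists_finite_norming_set (E F : Type*) [NormedAddCommGroup E] [InnerProductSpace ℝ E]
    [FiniteDimensional ℝ E] [NormedAddCommGroup F] [InnerProductSpace ℝ F] [FiniteDimensional ℝ F]
    {δ : ℝ} (hδ : 0 < δ) :
    ∃ N : Set (F × E), N.Finite ∧ N.Nonempty ∧ (∀ p ∈ N, ‖p.1‖ ≤ 1 ∧ ‖p.2‖ ≤ 1) ∧
      ∀ f : E →L[ℝ] F, ∃ p ∈ N, (1 - δ) * ‖f‖ ≤ ⟪p.1, f p.2⟫ := by
  have hcompact : IsCompact (Metric.closedBall (0 : F × E) 1) := isCompact_closedBall _ _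
  obtain ⟨N, hN, hfin, hcover⟩ := hcompact.finite_cover_balls (show 0 < δ / 3 by positivity)
  have hnear (q : F × E) (hq : ‖q‖ ≤ 1) : ∃ p ∈ N, ‖q - p‖ < δ / 3 := by
    simpa [dist_eq_norm] using hcover (mem_closedBall_zero_iff.2 hq)
  refine ⟨N, hfin, (hnear 0 (by simp)).imp fun _ h => h.1,
    fun p hp => norm_prod_le_iff.1 (mem_closedBall_zero_iff.1 (hN hp)), fun f => ?_⟩
  rcases eq_or_ne f 0 with rfl | hf
  · obtain ⟨p, hp, -⟩ := hnear 0 (by simp)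
    exact ⟨p, hp, by simp⟩
  have hf0 : 0 < ‖f‖ := norm_pos_iff.2 hf
  obtain ⟨x, hx, hfx⟩ := f.exists_lt_apply_of_lt_opNorm
    (show (1 - δ / 3) * ‖f‖ < ‖f‖ by nlinarith)
  obtain ⟨y, hy, hyfx⟩ : ∃ y : F, ‖y‖ ≤ 1 ∧ ⟪y, f x⟫ = ‖f x‖ := by
    refine ⟨‖f x‖⁻¹ • f x, ?_, ?_⟩
    · rw [norm_smul, norm_inv, norm_norm]
      exact inv_mul_le_one
    · rw [real_inner_smul_left, real_inner_self_eq_norm_sq, sq, ← mul_assoc]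
      exact inv_mul_mul_self _
  obtain ⟨p, hp, hdist⟩ := hnear (y, x) (norm_prod_le_iff.2 ⟨hy, hx.le⟩)
  obtain ⟨hd₁, hd₂⟩ := norm_prod_le_iff.1 hdist.le
  have hp₁ : ‖p.1‖ ≤ 1 := (norm_prod_le_iff.1 (mem_closedBall_zero_iff.1 (hN hp))).1
  have hsplit : ⟪p.1, f p.2⟫ = ⟪y, f x⟫ - ⟪y - p.1, f x⟫ - ⟪p.1, f (x - p.2)⟫ := by
    rw [map_sub, inner_sub_left, inner_sub_right]
    ring
  have hleft : ⟪y - p.1, f x⟫ ≤ δ / 3 * ‖f‖ :=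
    (real_inner_le_norm _ _).trans
      (mul_le_mul hd₁ (f.unit_le_opNorm x hx.le) (norm_nonneg _) (by positivity))
  have hright : ⟪p.1, f (x - p.2)⟫ ≤ δ / 3 * ‖f‖ :=
    calc ⟪p.1, f (x - p.2)⟫ ≤ ‖p.1‖ * ‖f (x - p.2)‖ := real_inner_le_norm _ _
      _ ≤ 1 * (‖f‖ * ‖x - p.2‖) :=
          mul_le_mul hp₁ (f.le_opNorm _) (norm_nonneg _) zero_le_one
      _ ≤ δ / 3 * ‖f‖ := by
          rw [one_mul, mul_comm]
          exact mul_le_mul_of_nonneg_right hd₂ hf0.le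
  refine ⟨p, hp, ?_⟩
  rw [hsplit, hyfx]
  linarith

variable {ι κ α β : Type*} [Fintype ι] [Fintype κ] [Fintype α] [Fintype β]

lemma sqrt_mulVec_dotProduct_self_le [DecidableEq κ] (M : Matrix ι κ ℝ) (v : κ → ℝ) :
    √((M *ᵥ v) ⬝ᵥ (M *ᵥ v)) ≤ ‖M‖ * √(v ⬝ᵥ v) := by
  simpa [EuclideanSpace.norm_eq, dotProduct, sq] using l2_opNorm_mulVec M (WithLp.toLp 2 v)

lemma norm_le_of_sqrt_mulVec_le [DecidableEq κ] {M : Matrix ι κ ℝ} {c : ℝ} (hc : 0 ≤ c)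
    (h : ∀ v, √((M *ᵥ v) ⬝ᵥ (M *ᵥ v)) ≤ c * √(v ⬝ᵥ v)) : ‖M‖ ≤ c := by
  rw [l2_opNorm_def]
  refine ContinuousLinearMap.opNorm_le_bound _ hc fun x => ?_
  simpa [EuclideanSpace.norm_eq, dotProduct, sq] using h x.ofLp

lemma abs_apply_le_norm [DecidableEq κ] (M : Matrix ι κ ℝ) (i : ι) (j : κ) : |M i j| ≤ ‖M‖ := by
  have h := (PiLp.norm_apply_le _ i).trans (l2_opNorm_mulVec M (EuclideanSpace.single j 1))
  simpa using h

lemma dotProduct_le_sqrt_mul_sqrt (u v : ι → ℝ) : u ⬝ᵥ v ≤ √(u ⬝ᵥ u) * √(v ⬝ᵥ v) := by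
  simpa only [dotProduct, sq] using Real.sum_mul_le_sqrt_mul_sqrt Finset.univ u v

lemma exists_finite_norming_pairs [DecidableEq κ] {δ : ℝ} (hδ : 0 < δ) :
    ∃ N : Set ((ι → ℝ) × (κ → ℝ)), N.Finite ∧ N.Nonempty ∧
      (∀ p ∈ N, √(p.1 ⬝ᵥ p.1) ≤ 1 ∧ √(p.2 ⬝ᵥ p.2) ≤ 1) ∧
      ∀ M : Matrix ι κ ℝ, ∃ p ∈ N, (1 - δ) * ‖M‖ ≤ p.1 ⬝ᵥ M *ᵥ p.2 := by
  obtain ⟨N, hfin, hne, hball, hN⟩ :=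
    exists_finite_norming_set (EuclideanSpace ℝ κ) (EuclideanSpace ℝ ι) hδ
  refine ⟨Prod.map WithLp.ofLp WithLp.ofLp '' N, hfin.image _, hne.image _, ?_, fun M => ?_⟩
  · rintro _ ⟨p, hp, rfl⟩
    simpa [EuclideanSpace.norm_eq, dotProduct, sq] using hball p hp
  · obtain ⟨p, hp, h⟩ := hN (toEuclideanLin.trans LinearMap.toContinuousLinearMap M)
    refine ⟨_, Set.mem_image_of_mem _ hp, h.trans_eq ?_⟩
    simp [EuclideanSpace.inner_eq_star_dotProduct, dotProduct_comm]

/-- The matrix with entries `g (i, j)`. Gaussian matrices are sampled as Gaussian vectors indexed by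
pairs, so that the results on `stdGaussianPi` apply to them. -/
def matrixOfEntries {ι κ : Type*} (g : ι × κ → ℝ) : Matrix ι κ ℝ := of fun i j => g (i, j)

lemma dotProduct_matrixOfEntries_mulVec (x : ι → ℝ) (g : ι × κ → ℝ) (y : κ → ℝ) :
    x ⬝ᵥ matrixOfEntries g *ᵥ y = (fun p => x p.1 * y p.2) ⬝ᵥ g := by
  simp only [dotProduct, mulVec, matrixOfEntries, of_apply, Fintype.sum_prod_type, Finset.mul_sum]
  exact Finset.sum_congr rfl fun i _ => Finset.sum_congr rfl fun j _ => by ring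

lemma hasPolynomialGrowth_matrixOfEntries (i : ι) (j : κ) :
    HasPolynomialGrowth fun g : ι × κ → ℝ => matrixOfEntries g i j :=
  HasPolynomialGrowth.apply (i, j)

lemma sum_tensor_single_dotProduct_mul [DecidableEq κ] (x : ι → ℝ) (g : ι × κ → ℝ) (y : κ → ℝ) :
    ∑ j, ((fun p => x p.1 * (Pi.single j 1 : κ → ℝ) p.2) ⬝ᵥ g) * y j =
      x ⬝ᵥ matrixOfEntries g *ᵥ y := by
  simp only [← dotProduct_matrixOfEntries_mulVec, mulVec_single_one]
  rw [dotProduct_mulVec]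
  rfl

lemma dotProduct_self_tensor_sub_le (s s' : ι → ℝ) (t t' : κ → ℝ) :
    ((fun p : ι × κ => s p.1 * t p.2) - fun p => s' p.1 * t' p.2) ⬝ᵥ
        ((fun p => s p.1 * t p.2) - fun p => s' p.1 * t' p.2) ≤
      (√(t ⬝ᵥ t) • s - √(t' ⬝ᵥ t') • s') ⬝ᵥ (√(t ⬝ᵥ t) • s - √(t' ⬝ᵥ t') • s') +
        (√(s ⬝ᵥ s) • t - √(s' ⬝ᵥ s') • t') ⬝ᵥ (√(s ⬝ᵥ s) • t - √(s' ⬝ᵥ s') • t') := by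
  have htensor (x x' : ι → ℝ) (y y' : κ → ℝ) :
      (fun p : ι × κ => x p.1 * y p.2) ⬝ᵥ (fun p => x' p.1 * y' p.2) = x ⬝ᵥ x' * y ⬝ᵥ y' := by
    simp only [dotProduct, Fintype.sum_prod_type, Finset.sum_mul_sum]
    exact Finset.sum_congr rfl fun i _ => Finset.sum_congr rfl fun j _ => by ring
  have hs := sub_nonneg.2 (dotProduct_le_sqrt_mul_sqrt s s')
  have ht := sub_nonneg.2 (dotProduct_le_sqrt_mul_sqrt t t')
  simp only [sub_dotProduct, dotProduct_sub, smul_dotProduct, dotProduct_smul, smul_eq_mul,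
    htensor, dotProduct_comm s' s, dotProduct_comm t' t]
  have hss := Real.sq_sqrt (dotProduct_self_nonneg s)
  have hss' := Real.sq_sqrt (dotProduct_self_nonneg s')
  have htt := Real.sq_sqrt (dotProduct_self_nonneg t)
  have htt' := Real.sq_sqrt (dotProduct_self_nonneg t')
  generalize √(s ⬝ᵥ s) = a, √(s' ⬝ᵥ s') = a', √(t ⬝ᵥ t) = b, √(t' ⬝ᵥ t') = b' at *
  rw [← hss, ← hss', ← htt, ← htt']
  linear_combination sq_nonneg (a * b - a' * b') + 2 * mul_nonneg hs ht

/-- The Frobenius norm, kept separate from the operator norm, which is the active norm instance. -/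
noncomputable def frobNorm {ι κ : Type*} [Fintype ι] [Fintype κ] (M : Matrix ι κ ℝ) : ℝ :=
  √(∑ i, ∑ j, M i j ^ 2)

lemma frobNorm_transpose (M : Matrix ι κ ℝ) : frobNorm Mᵀ = frobNorm M := by
  rw [frobNorm, Finset.sum_comm]
  rfl

lemma norm_le_frobNorm [DecidableEq κ] (M : Matrix ι κ ℝ) : ‖M‖ ≤ frobNorm M := by
  refine norm_le_of_sqrt_mulVec_le (Real.sqrt_nonneg _) fun v => ?_
  rw [frobNorm, ← Real.sqrt_mul (by positivity), Finset.sum_mul]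
  refine Real.sqrt_le_sqrt (Finset.sum_le_sum fun i _ => ?_)
  simpa [mulVec, dotProduct, sq] using Finset.sum_mul_sq_le_sq_mul_sq Finset.univ (M i) v

lemma HasPolynomialGrowth.norm_matrix {E : Type*} [NormedAddCommGroup E] [NormedSpace ℝ E]
    [DecidableEq κ] {M : E → Matrix ι κ ℝ} (hM : ∀ i j, HasPolynomialGrowth fun x => M x i j) :
    HasPolynomialGrowth fun x => ‖M x‖ := by
  have hfrob : HasPolynomialGrowth fun x => frobNorm (M x) := by
    unfold frobNorm
    fun_prop
  refine .mono (continuous_matrix fun i j => (hM i j).1).norm hfrob fun x => ?_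
  rw [norm_norm]
  exact (norm_le_frobNorm _).trans (le_abs_self _)

lemma integral_sqrt_mulVec_dotProduct_self_le (S : Matrix ι κ ℝ) :
    ∫ g, √((S *ᵥ g) ⬝ᵥ (S *ᵥ g)) ∂(stdGaussianPi κ) ≤ frobNorm S := by
  rw [frobNorm, ← integral_mulVec_dotProduct_self]
  exact integral_sqrt_le (HasPolynomialGrowth.integrable (by fun_prop))
    fun g => Finset.sum_nonneg fun i _ => mul_self_nonneg _

lemma norm_transpose_eq [DecidableEq ι] [DecidableEq κ] (M : Matrix ι κ ℝ) : ‖Mᵀ‖ = ‖M‖ := by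
  rw [← conjTranspose_eq_transpose_of_trivial, l2_opNorm_conjTranspose]

lemma integral_comp_inl_add_comp_inr {f : (ι → ℝ) → ℝ} {h : (κ → ℝ) → ℝ}
    (hf : HasPolynomialGrowth f) (hh : HasPolynomialGrowth h) :
    ∫ g, (f (g ∘ Sum.inl) + h (g ∘ Sum.inr)) ∂(stdGaussianPi (ι ⊕ κ)) =
      ∫ x, f x ∂(stdGaussianPi ι) + ∫ y, h y ∂(stdGaussianPi κ) := by
  have hmeas : HasPolynomialGrowth fun g : ι ⊕ κ → ℝ => f (g ∘ Sum.inl) + h (g ∘ Sum.inr) := by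
    simp only [Function.comp_def]
    fun_prop
  rw [← integral_comp_of_measurePreserving measurePreserving_elim_stdGaussianPi
    hmeas.integrable.aestronglyMeasurable]
  simp only [Sum.elim_comp_inl, Sum.elim_comp_inr]
  rw [integral_add (HasPolynomialGrowth.integrable (by fun_prop))
    (HasPolynomialGrowth.integrable (by fun_prop)), integral_fun_fst, integral_fun_snd]
  simp

lemma integral_iSup_tensor_le {N : Type*} [Finite N] [Nonempty N] (s : N → ι → ℝ)
    (t : N → κ → ℝ) :
    ∫ g, ⨆ i, (fun p : ι × κ => s i p.1 * t i p.2) ⬝ᵥ g ∂(stdGaussianPi (ι × κ)) ≤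
      ∫ g, ⨆ i, (√(t i ⬝ᵥ t i) * (s i ⬝ᵥ g ∘ Sum.inl) + √(s i ⬝ᵥ s i) * (t i ⬝ᵥ g ∘ Sum.inr))
        ∂(stdGaussianPi (ι ⊕ κ)) := by
  let X : Matrix N (ι × κ) ℝ := of fun i p => s i p.1 * t i p.2
  let Y : Matrix N (ι ⊕ κ) ℝ := of fun i => Sum.elim (√(t i ⬝ᵥ t i) • s i) (√(s i ⬝ᵥ s i) • t i)
  have hinc (i j : N) : (X i - X j) ⬝ᵥ (X i - X j) ≤ (Y i - Y j) ⬝ᵥ (Y i - Y j) := by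
    refine (dotProduct_self_tensor_sub_le (s i) (s j) (t i) (t j)).trans_eq ?_
    simp [Y, dotProduct]
  refine (sudakov_fernique hinc).trans_eq (integral_congr_ae (.of_forall fun g => ?_))
  simp [Y, mulVec, dotProduct, Finset.mul_sum, mul_assoc]

lemma integral_iSup_dotProduct_mulVec_le [DecidableEq ι] [DecidableEq β] {N : Type*} [Finite N]
    [Nonempty N] (S : Matrix α ι ℝ) (T : Matrix κ β ℝ) {u : N → α → ℝ} {w : N → β → ℝ}
    (hu : ∀ i, √(u i ⬝ᵥ u i) ≤ 1) (hw : ∀ i, √(w i ⬝ᵥ w i) ≤ 1) :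
    ∫ g, ⨆ i, u i ⬝ᵥ (S * matrixOfEntries g * T) *ᵥ w i ∂(stdGaussianPi (ι × κ)) ≤
      ‖S‖ * frobNorm T + frobNorm S * ‖T‖ := by
  cases nonempty_fintype N
  have hs (i : N) : √((Sᵀ *ᵥ u i) ⬝ᵥ (Sᵀ *ᵥ u i)) ≤ ‖S‖ := by
    classical
    rw [← norm_transpose_eq]
    exact (sqrt_mulVec_dotProduct_self_le _ _).trans (mul_le_of_le_one_right (norm_nonneg _) (hu i))
  have ht (i : N) : √((T *ᵥ w i) ⬝ᵥ (T *ᵥ w i)) ≤ ‖T‖ :=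
    (sqrt_mulVec_dotProduct_self_le _ _).trans (mul_le_of_le_one_right (norm_nonneg _) (hw i))
  have hsg (i : N) (x : ι → ℝ) : (Sᵀ *ᵥ u i) ⬝ᵥ x ≤ √((S *ᵥ x) ⬝ᵥ (S *ᵥ x)) := by
    rw [mulVec_transpose, ← dotProduct_mulVec]
    exact (dotProduct_le_sqrt_mul_sqrt _ _).trans
      (mul_le_of_le_one_left (Real.sqrt_nonneg _) (hu i))
  have htg (i : N) (y : κ → ℝ) : (T *ᵥ w i) ⬝ᵥ y ≤ √((Tᵀ *ᵥ y) ⬝ᵥ (Tᵀ *ᵥ y)) := by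
    rw [dotProduct_comm, dotProduct_mulVec, ← mulVec_transpose, dotProduct_comm]
    exact (dotProduct_le_sqrt_mul_sqrt _ _).trans
      (mul_le_of_le_one_left (Real.sqrt_nonneg _) (hw i))
  have htensor (i : N) (g : ι × κ → ℝ) : u i ⬝ᵥ (S * matrixOfEntries g * T) *ᵥ w i =
      (fun p => (Sᵀ *ᵥ u i) p.1 * (T *ᵥ w i) p.2) ⬝ᵥ g := by
    rw [← mulVec_mulVec, ← mulVec_mulVec, dotProduct_mulVec, ← mulVec_transpose,
      dotProduct_matrixOfEntries_mulVec]
  simp only [htensor]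
  calc _ ≤ _ := integral_iSup_tensor_le (fun i => Sᵀ *ᵥ u i) fun i => T *ᵥ w i
    _ ≤ ∫ g, (‖T‖ * √((S *ᵥ (g ∘ Sum.inl)) ⬝ᵥ (S *ᵥ (g ∘ Sum.inl))) +
          ‖S‖ * √((Tᵀ *ᵥ (g ∘ Sum.inr)) ⬝ᵥ (Tᵀ *ᵥ (g ∘ Sum.inr)))) ∂(stdGaussianPi (ι ⊕ κ)) := by
        simp only [Function.comp_def]
        exact integral_mono (HasPolynomialGrowth.integrable (by fun_prop))
          (HasPolynomialGrowth.integrable (by fun_prop)) fun g => ciSup_le fun i => add_le_add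
            (mul_le_mul_of_nonneg (ht i) (hsg i _) (Real.sqrt_nonneg _) (Real.sqrt_nonneg _))
            (mul_le_mul_of_nonneg (hs i) (htg i _) (Real.sqrt_nonneg _) (Real.sqrt_nonneg _))
    _ = ‖T‖ * ∫ x, √((S *ᵥ x) ⬝ᵥ (S *ᵥ x)) ∂(stdGaussianPi ι) +
          ‖S‖ * ∫ y, √((Tᵀ *ᵥ y) ⬝ᵥ (Tᵀ *ᵥ y)) ∂(stdGaussianPi κ) := by
        rw [← integral_const_mul, ← integral_const_mul]
        exact integral_comp_inl_add_comp_inr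
          (f := fun x => ‖T‖ * √((S *ᵥ x) ⬝ᵥ (S *ᵥ x)))
          (h := fun y => ‖S‖ * √((Tᵀ *ᵥ y) ⬝ᵥ (Tᵀ *ᵥ y))) (by fun_prop) (by fun_prop)
    _ ≤ ‖T‖ * frobNorm S + ‖S‖ * frobNorm Tᵀ :=
        add_le_add
          (mul_le_mul_of_nonneg_left (integral_sqrt_mulVec_dotProduct_self_le S) (norm_nonneg _))
          (mul_le_mul_of_nonneg_left (integral_sqrt_mulVec_dotProduct_self_le Tᵀ) (norm_nonneg _))
    _ = ‖S‖ * frobNorm T + frobNorm S * ‖T‖ := by rw [frobNorm_transpose]; ring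

theorem integral_norm_mul_matrixOfEntries_mul_le [DecidableEq ι] [DecidableEq β]
    (S : Matrix α ι ℝ) (T : Matrix κ β ℝ) :
    ∫ g, ‖S * matrixOfEntries g * T‖ ∂(stdGaussianPi (ι × κ)) ≤
      ‖S‖ * frobNorm T + frobNorm S * ‖T‖ := by
  set B := ‖S‖ * frobNorm T + frobNorm S * ‖T‖
  have hgrowth : HasPolynomialGrowth fun g : ι × κ → ℝ => ‖S * matrixOfEntries g * T‖ :=
    .norm_matrix fun i j => by
      simp only [mul_apply, matrixOfEntries, of_apply]
      fun_prop
  have hnet (δ : ℝ) (hδ : 0 < δ) :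
      (1 - δ) * ∫ g, ‖S * matrixOfEntries g * T‖ ∂(stdGaussianPi (ι × κ)) ≤ B := by
    obtain ⟨N, hfin, hne, hball, hN⟩ := exists_finite_norming_pairs (ι := α) (κ := β) hδ
    have : Fintype N := hfin.fintype
    have : Nonempty N := hne.to_subtype
    rw [← integral_const_mul]
    refine (integral_mono (hgrowth.integrable.const_mul _) ?_ fun g => ?_).trans
      (integral_iSup_dotProduct_mulVec_le S T (u := fun p : N => p.1.1) (w := fun p => p.1.2)
        (fun p => (hball p p.2).1) fun p => (hball p p.2).2)
    · refine (hasPolynomialGrowth_iSup.comp (.pi fun p => ?_)).integrable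
      simp only [dotProduct, mulVec, mul_apply, matrixOfEntries, of_apply]
      fun_prop
    · obtain ⟨p, hp, hle⟩ := hN (S * matrixOfEntries g * T)
      exact hle.trans (le_ciSup (f := fun p : N => p.1.1 ⬝ᵥ (S * matrixOfEntries g * T) *ᵥ p.1.2)
        (Set.finite_range _).bddAbove ⟨p, hp⟩)
  have hlim : Filter.Tendsto (fun δ : ℝ => (1 - δ) *
      ∫ g, ‖S * matrixOfEntries g * T‖ ∂(stdGaussianPi (ι × κ))) (nhdsWithin 0 (Set.Ioi 0))
      (nhds (∫ g, ‖S * matrixOfEntries g * T‖ ∂(stdGaussianPi (ι × κ)))) := by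
    refine (Continuous.tendsto' (by fun_prop) 0 _ (by simp)).mono_left nhdsWithin_le_nhds
  exact le_of_tendsto hlim (eventually_nhdsWithin_of_forall hnet)

end Chevet

section TikhonovPinv

open scoped Matrix.Norms.L2Operator

variable {ι κ : Type*} [Fintype κ] [DecidableEq ι] {ε : ℝ}

lemma posDef_gram_add_smul_one [Finite ι] (hε : 0 < ε) (M : Matrix ι κ ℝ) :
    (M * Mᵀ + ε • (1 : Matrix ι ι ℝ)).PosDef := by
  cases nonempty_fintype ι
  have hgram : (M * Mᵀ).PosSemidef := by simpa using posSemidef_self_mul_conjTranspose M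
  exact PosDef.posSemidef_add hgram (PosDef.one.smul hε)

variable [Fintype ι]

/-- The inverse of the regularized Gram matrix `M Mᵀ + ε I`. For `ε > 0` it is a smooth function of
`M`, bounded by `ε⁻¹`, whereas `(M Mᵀ)⁻¹` is singular at rank-deficient `M`. -/
noncomputable def gramResolvent (ε : ℝ) (M : Matrix ι κ ℝ) : Matrix ι ι ℝ := (M * Mᵀ + ε • 1)⁻¹

/-- The Tikhonov regularization `Mᵀ (M Mᵀ + ε I)⁻¹` of the pseudoinverse of a wide matrix. -/
noncomputable def tikhonovPinv (ε : ℝ) (M : Matrix ι κ ℝ) : Matrix κ ι ℝ := Mᵀ * gramResolvent ε M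

lemma posSemidef_gramResolvent (hε : 0 < ε) (M : Matrix ι κ ℝ) : (gramResolvent ε M).PosSemidef :=
  (posDef_gram_add_smul_one hε M).inv.posSemidef

lemma transpose_gramResolvent (hε : 0 < ε) (M : Matrix ι κ ℝ) :
    (gramResolvent ε M)ᵀ = gramResolvent ε M := by
  simpa using (posSemidef_gramResolvent hε M).isHermitian.eq

lemma mul_tikhonovPinv (hε : 0 < ε) (M : Matrix ι κ ℝ) :
    M * tikhonovPinv ε M = 1 - ε • gramResolvent ε M := by
  have h := mul_nonsing_inv _
    ((isUnit_iff_isUnit_det _).1 (posDef_gram_add_smul_one hε M).isUnit)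
  rw [add_mul, Matrix.smul_mul, one_mul] at h
  rw [tikhonovPinv, ← Matrix.mul_assoc]
  exact eq_sub_of_add_eq h

lemma dotProduct_gramResolvent_mulVec_comm (hε : 0 < ε) (M : Matrix ι κ ℝ) (u v : ι → ℝ) :
    u ⬝ᵥ gramResolvent ε M *ᵥ v = v ⬝ᵥ gramResolvent ε M *ᵥ u := by
  rw [dotProduct_mulVec, ← mulVec_transpose, transpose_gramResolvent hε, dotProduct_comm]

lemma dotProduct_gramResolvent_mulVec_nonneg (hε : 0 < ε) (M : Matrix ι κ ℝ) (h : ι → ℝ) :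
    0 ≤ h ⬝ᵥ gramResolvent ε M *ᵥ h := by
  simpa using (posSemidef_gramResolvent hε M).dotProduct_mulVec_nonneg h

lemma mulVec_tikhonovPinv_mulVec (hε : 0 < ε) (M : Matrix ι κ ℝ) (h : ι → ℝ) :
    M *ᵥ tikhonovPinv ε M *ᵥ h = h - ε • gramResolvent ε M *ᵥ h := by
  rw [mulVec_mulVec, mul_tikhonovPinv hε, sub_mulVec, one_mulVec, smul_mulVec]

lemma tikhonovPinv_mulVec_dotProduct_self (hε : 0 < ε) (M : Matrix ι κ ℝ) (h : ι → ℝ) :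
    (tikhonovPinv ε M *ᵥ h) ⬝ᵥ (tikhonovPinv ε M *ᵥ h) =
      h ⬝ᵥ gramResolvent ε M *ᵥ h - ε * ((gramResolvent ε M *ᵥ h) ⬝ᵥ (gramResolvent ε M *ᵥ h)) := by
  calc (tikhonovPinv ε M *ᵥ h) ⬝ᵥ (tikhonovPinv ε M *ᵥ h)
      = (gramResolvent ε M *ᵥ h) ⬝ᵥ (M *ᵥ tikhonovPinv ε M *ᵥ h) := by
        rw [dotProduct_mulVec _ M, ← mulVec_transpose, mulVec_mulVec, ← tikhonovPinv]
    _ = _ := by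
        rw [mulVec_tikhonovPinv_mulVec hε, dotProduct_sub, dotProduct_smul, smul_eq_mul,
          dotProduct_comm h]

lemma tikhonovPinv_mulVec_dotProduct_self_le (hε : 0 < ε) (M : Matrix ι κ ℝ) (h : ι → ℝ) :
    (tikhonovPinv ε M *ᵥ h) ⬝ᵥ (tikhonovPinv ε M *ᵥ h) ≤ h ⬝ᵥ gramResolvent ε M *ᵥ h := by
  rw [tikhonovPinv_mulVec_dotProduct_self hε]
  exact sub_le_self _ (mul_nonneg hε.le (dotProduct_self_nonneg _))

lemma norm_gramResolvent_le (hε : 0 < ε) (M : Matrix ι κ ℝ) : ‖gramResolvent ε M‖ ≤ ε⁻¹ := by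
  refine norm_le_of_sqrt_mulVec_le (inv_nonneg.2 hε.le) fun h => ?_
  set w := gramResolvent ε M *ᵥ h
  have hw : ε * (w ⬝ᵥ w) ≤ √(h ⬝ᵥ h) * √(w ⬝ᵥ w) :=
    (sub_nonneg.1 <| (dotProduct_self_nonneg _).trans_eq
      (tikhonovPinv_mulVec_dotProduct_self hε M h)).trans (dotProduct_le_sqrt_mul_sqrt h w)
  have hsq : √(w ⬝ᵥ w) * √(w ⬝ᵥ w) = w ⬝ᵥ w := Real.mul_self_sqrt (dotProduct_self_nonneg w)
  rw [inv_mul_eq_div, le_div_iff₀ hε]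
  rcases (Real.sqrt_nonneg (w ⬝ᵥ w)).eq_or_lt with h0 | h0
  · rw [← h0, zero_mul]
    exact Real.sqrt_nonneg _
  · exact le_of_mul_le_mul_right (by linarith [congrArg (ε * ·) hsq]) h0

lemma trace_tikhonovPinv_mul_self_le (hε : 0 < ε) (M : Matrix ι κ ℝ) :
    (tikhonovPinv ε M * M).trace ≤ Fintype.card ι := by
  rw [trace_mul_comm, mul_tikhonovPinv hε, trace_sub, trace_one, trace_smul]
  exact sub_le_self _ (mul_nonneg hε.le (posSemidef_gramResolvent hε M).trace_nonneg)

section Derivative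

lemma hasDerivAt_gramResolvent (hε : 0 < ε) {M : ℝ → Matrix ι κ ℝ} {M' : Matrix ι κ ℝ} {t : ℝ}
    (hM : HasDerivAt M M' t) :
    HasDerivAt (fun t => gramResolvent ε (M t))
      (-(gramResolvent ε (M t) * (M' * (M t)ᵀ + M t * M'ᵀ) * gramResolvent ε (M t))) t := by
  have hgram : HasDerivAt (fun t => M t * (M t)ᵀ + ε • (1 : Matrix ι ι ℝ))
      (M' * (M t)ᵀ + M t * M'ᵀ) t :=
    (hasDerivAt_pi.2 fun i => hasDerivAt_pi.2 fun j =>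
      hasDerivAt_dotProduct (hasDerivAt_pi.1 hM i) (hasDerivAt_pi.1 hM j)).add_const _
  obtain ⟨u, hu⟩ := (posDef_gram_add_smul_one hε (M t)).isUnit
  have hinv := hasFDerivAt_ringInverse (𝕜 := ℝ) u
  rw [hu] at hinv
  simp only [gramResolvent, nonsing_inv_eq_ringInverse]
  refine (hinv.comp_hasDerivAt t hgram).congr_deriv ?_
  simp [← hu]

variable [DecidableEq κ] (M : Matrix ι κ ℝ) (h : ι → ℝ) (b : κ)

lemma hasDerivAt_gramResolvent_mulVec (hε : 0 < ε) :
    HasDerivAt (fun t : ℝ => gramResolvent ε (M + t • vecMulVec h (Pi.single b 1)) *ᵥ h)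
      (-((tikhonovPinv ε M *ᵥ h) b • gramResolvent ε M *ᵥ h +
        (h ⬝ᵥ gramResolvent ε M *ᵥ h) • gramResolvent ε M *ᵥ M.col b)) 0 := by
  have hW := hasDerivAt_gramResolvent hε (hasDerivAt_add_smul M (vecMulVec h (Pi.single b 1)))
  refine (hasDerivAt_pi.2 fun i => hasDerivAt_dotProduct (hasDerivAt_pi.1 hW i)
    (hasDerivAt_const 0 h)).congr_deriv ?_
  simp only [zero_smul, add_zero, dotProduct_zero]
  set W := gramResolvent ε M
  change (-(W * (vecMulVec h (Pi.single b 1) * Mᵀ + M * (vecMulVec h (Pi.single b 1))ᵀ) * W)) *ᵥ h =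
    _
  have hb : Pi.single b 1 ⬝ᵥ Mᵀ *ᵥ W *ᵥ h = (tikhonovPinv ε M *ᵥ h) b := by
    rw [single_dotProduct, one_mul, tikhonovPinv, mulVec_mulVec]
  simp only [transpose_vecMulVec, neg_mulVec, ← mulVec_mulVec, add_mulVec, mulVec_add,
    vecMulVec_mulVec, hb, mulVec_smul, mulVec_single_one, op_smul_eq_smul]

lemma hasDerivAt_dotProduct_gramResolvent_mulVec (hε : 0 < ε) :
    HasDerivAt (fun t : ℝ => h ⬝ᵥ gramResolvent ε (M + t • vecMulVec h (Pi.single b 1)) *ᵥ h)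
      (-2 * (h ⬝ᵥ gramResolvent ε M *ᵥ h) * (tikhonovPinv ε M *ᵥ h) b) 0 := by
  refine (hasDerivAt_dotProduct (hasDerivAt_const 0 h)
    (hasDerivAt_gramResolvent_mulVec M h b hε)).congr_deriv ?_
  have hb : h ⬝ᵥ gramResolvent ε M *ᵥ M.col b = (tikhonovPinv ε M *ᵥ h) b := by
    rw [dotProduct_gramResolvent_mulVec_comm hε, tikhonovPinv, ← mulVec_mulVec]
    rfl
  rw [zero_dotProduct, zero_add, dotProduct_neg, dotProduct_add, dotProduct_smul, dotProduct_smul,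
    hb, smul_eq_mul, smul_eq_mul]
  ring

lemma hasDerivAt_tikhonovPinv_mulVec (hε : 0 < ε) :
    HasDerivAt (fun t : ℝ => (tikhonovPinv ε (M + t • vecMulVec h (Pi.single b 1)) *ᵥ h) b)
      (h ⬝ᵥ gramResolvent ε M *ᵥ h - (tikhonovPinv ε M *ᵥ h) b ^ 2 -
        (h ⬝ᵥ gramResolvent ε M *ᵥ h) * (tikhonovPinv ε M * M) b b) 0 := by
  have hcol : HasDerivAt (fun t : ℝ => (M + t • vecMulVec h (Pi.single b 1)).col b) h 0 := by
    refine (hasDerivAt_add_smul (M.col b) h).congr_of_eventuallyEq (.of_forall fun t => ?_)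
    ext i
    simp [vecMulVec_apply]
  have hT (N : Matrix ι κ ℝ) :
      (tikhonovPinv ε N *ᵥ h) b = N.col b ⬝ᵥ gramResolvent ε N *ᵥ h := by
    rw [tikhonovPinv, ← mulVec_mulVec]
    rfl
  have hTM : (tikhonovPinv ε M * M) b b = M.col b ⬝ᵥ gramResolvent ε M *ᵥ M.col b := by
    rw [tikhonovPinv, Matrix.mul_assoc, mul_apply_eq_vecMul]
    rfl
  have hderiv := hasDerivAt_dotProduct hcol (hasDerivAt_gramResolvent_mulVec M h b hε)
  simp only [hT] at hderiv ⊢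
  refine hderiv.congr_deriv ?_
  simp only [zero_smul, add_zero, dotProduct_neg, dotProduct_add, dotProduct_smul, smul_eq_mul, hTM]
  ring

end Derivative

lemma continuous_gramResolvent (hε : 0 < ε) :
    Continuous fun M : Matrix ι κ ℝ => gramResolvent ε M := by
  refine continuous_iff_continuousAt.2 fun M => ?_
  obtain ⟨u, hu⟩ := (posDef_gram_add_smul_one hε M).isUnit
  have hinv := NormedRing.inverse_continuousAt u
  rw [hu] at hinv
  simp only [gramResolvent, nonsing_inv_eq_ringInverse]
  exact ContinuousAt.comp (f := fun M : Matrix ι κ ℝ => M * Mᵀ + ε • (1 : Matrix ι ι ℝ)) hinv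
    (by fun_prop)

lemma hasPolynomialGrowth_gramResolvent (hε : 0 < ε) (i j : ι) :
    HasPolynomialGrowth fun g : ι × κ → ℝ => gramResolvent ε (matrixOfEntries g) i j := by
  have hcont : Continuous fun g : ι × κ → ℝ => gramResolvent ε (matrixOfEntries g) :=
    (continuous_gramResolvent hε).comp
      (continuous_matrix fun i j => (hasPolynomialGrowth_matrixOfEntries i j).1)
  refine .mono (hcont.matrix_elem i j) (.const ε⁻¹) fun g => ?_
  exact ((abs_apply_le_norm _ i j).trans (norm_gramResolvent_le hε _)).trans (le_abs_self _)

lemma hasPolynomialGrowth_tikhonovPinv (hε : 0 < ε) (j : κ) (i : ι) :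
    HasPolynomialGrowth fun g : ι × κ → ℝ => tikhonovPinv ε (matrixOfEntries g) j i := by
  simp only [tikhonovPinv, mul_apply, transpose_apply]
  have := hasPolynomialGrowth_matrixOfEntries (ι := ι) (κ := κ)
  have := hasPolynomialGrowth_gramResolvent (ι := ι) (κ := κ) hε
  fun_prop

lemma hasLineDerivAt_tikhonovPinv_mulVec_mul_pow [DecidableEq κ] (hε : 0 < ε) (h : ι → ℝ) (b : κ)
    (q : ℕ) (g : ι × κ → ℝ) :
    let φ := fun g : ι × κ → ℝ => h ⬝ᵥ gramResolvent ε (matrixOfEntries g) *ᵥ h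
    let c := fun g : ι × κ → ℝ => (tikhonovPinv ε (matrixOfEntries g) *ᵥ h) b
    HasLineDerivAt ℝ (fun g => c g * φ g ^ q)
      ((φ g - c g ^ 2 - φ g * (tikhonovPinv ε (matrixOfEntries g) * matrixOfEntries g) b b) *
          φ g ^ q + c g * (q * φ g ^ (q - 1) * (-2 * φ g * c g)))
      g (fun p => h p.1 * (Pi.single b 1 : κ → ℝ) p.2) :=
  ((hasDerivAt_tikhonovPinv_mulVec (matrixOfEntries g) h b hε).mul
    ((hasDerivAt_dotProduct_gramResolvent_mulVec (matrixOfEntries g) h b hε).pow q)).congr_deriv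
    (by simp)

lemma mul_pow_succ_le_sum {φ r : ℝ} {c z : κ → ℝ} (hφ : 0 ≤ φ) (hc : ∑ b, c b ^ 2 ≤ φ)
    (hz : ∑ b, z b ≤ r) (q : ℕ) :
    ((Fintype.card κ : ℝ) - r - 1 - 2 * q) * φ ^ (q + 1) ≤
      ∑ b, ((φ - c b ^ 2 - φ * z b) * φ ^ q + c b * (q * φ ^ (q - 1) * (-2 * φ * c b))) := by
  have hq : (q : ℝ) * φ ^ (q - 1) * φ = q * φ ^ q := by
    cases q <;> simp [pow_succ, mul_assoc]
  calc ((Fintype.card κ : ℝ) - r - 1 - 2 * q) * φ ^ (q + 1)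
      = (Fintype.card κ * φ - φ - φ * r - 2 * q * φ) * φ ^ q := by ring
    _ ≤ (Fintype.card κ * φ - ∑ b, c b ^ 2 - φ * ∑ b, z b - 2 * q * ∑ b, c b ^ 2) * φ ^ q := by
      gcongr
    _ = ∑ b, (φ - c b ^ 2 - φ * z b - 2 * q * c b ^ 2) * φ ^ q := by
      simp only [← Finset.sum_mul, Finset.sum_sub_distrib, Finset.mul_sum, Finset.sum_const,
        Finset.card_univ, nsmul_eq_mul]
    _ = _ := Finset.sum_congr rfl fun b _ => by linear_combination 2 * c b ^ 2 * hq

/-- Stein's identity in the directions `h ⊗ e_b`, applied to the functions `(T h)_b (h ⬝ W h) ^ q`,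
where `W` is the resolvent and `T` the regularized pseudoinverse. -/
theorem integral_dotProduct_gramResolvent_pow_succ_le (hε : 0 < ε) (h : ι → ℝ) (q : ℕ) :
    ((Fintype.card κ : ℝ) - Fintype.card ι - 1 - 2 * q) *
        ∫ g, (h ⬝ᵥ gramResolvent ε (matrixOfEntries g) *ᵥ h) ^ (q + 1) ∂(stdGaussianPi (ι × κ)) ≤
      (h ⬝ᵥ h) *
        ∫ g, (h ⬝ᵥ gramResolvent ε (matrixOfEntries g) *ᵥ h) ^ q ∂(stdGaussianPi (ι × κ)) := by
  classical
  have hG := hasPolynomialGrowth_matrixOfEntries (ι := ι) (κ := κ)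
  have hW := hasPolynomialGrowth_gramResolvent (ι := ι) (κ := κ) hε
  have hT := hasPolynomialGrowth_tikhonovPinv (ι := ι) (κ := κ) hε
  set φ : (ι × κ → ℝ) → ℝ := fun g => h ⬝ᵥ gramResolvent ε (matrixOfEntries g) *ᵥ h
  set c : (ι × κ → ℝ) → κ → ℝ := fun g => tikhonovPinv ε (matrixOfEntries g) *ᵥ h
  set z : (ι × κ → ℝ) → κ → ℝ := fun g b =>
    (tikhonovPinv ε (matrixOfEntries g) * matrixOfEntries g) b b with hz_def
  have hφ : HasPolynomialGrowth φ := by fun_prop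
  have hc : HasPolynomialGrowth c := by fun_prop
  have hz : HasPolynomialGrowth z := by simp only [hz_def, mul_apply]; fun_prop
  have hφ0 (g : ι × κ → ℝ) : 0 ≤ φ g := dotProduct_gramResolvent_mulVec_nonneg hε _ h
  have hstein (b : κ) := stein_stdGaussianPi (f := fun g => c g b * φ g ^ q)
    (f' := fun g => (φ g - c g b ^ 2 - φ g * z g b) * φ g ^ q +
      c g b * (q * φ g ^ (q - 1) * (-2 * φ g * c g b)))
    (hasLineDerivAt_tikhonovPinv_mulVec_mul_pow hε h b q) (by fun_prop) (by fun_prop)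
  have hfield (g : ι × κ → ℝ) :
      ∑ b, ((fun p => h p.1 * (Pi.single b 1 : κ → ℝ) p.2) ⬝ᵥ g) * (c g b * φ g ^ q) =
        (h ⬝ᵥ h - ε * φ g) * φ g ^ q := by
    simp only [← mul_assoc, ← Finset.sum_mul]
    rw [sum_tensor_single_dotProduct_mul, mulVec_tikhonovPinv_mulVec hε, dotProduct_sub,
      dotProduct_smul, smul_eq_mul]
  calc _ ≤ ∫ g, ∑ b, ((φ g - c g b ^ 2 - φ g * z g b) * φ g ^ q +
        c g b * (q * φ g ^ (q - 1) * (-2 * φ g * c g b))) ∂(stdGaussianPi (ι × κ)) := by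
        rw [← integral_const_mul]
        refine integral_mono (HasPolynomialGrowth.integrable (by fun_prop))
          (HasPolynomialGrowth.integrable (by fun_prop)) fun g => ?_
        refine mul_pow_succ_le_sum (hφ0 g) ?_ (trace_tikhonovPinv_mul_self_le hε _) q
        simp only [sq]
        exact tikhonovPinv_mulVec_dotProduct_self_le hε (matrixOfEntries g) h
    _ = ∫ g, (h ⬝ᵥ h - ε * φ g) * φ g ^ q ∂(stdGaussianPi (ι × κ)) := by
        simp only [← hfield]
        rw [integral_finsetSum _ fun b _ => HasPolynomialGrowth.integrable (by fun_prop),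
          integral_finsetSum _ fun b _ => HasPolynomialGrowth.integrable (by fun_prop)]
        exact Finset.sum_congr rfl fun b _ => (hstein b).symm
    _ ≤ _ := by
        rw [← integral_const_mul]
        refine integral_mono (HasPolynomialGrowth.integrable (by fun_prop))
          (HasPolynomialGrowth.integrable (by fun_prop)) fun g => ?_
        exact mul_le_mul_of_nonneg_right (sub_le_self _ (mul_nonneg hε.le (hφ0 g)))
          (pow_nonneg (hφ0 g) q)

end TikhonovPinv

section Products

lemma integral_log_le {m r : ℝ} (hr : 0 ≤ r) (hrm : r ≤ m) (hm : 0 < m) :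
    ∫ x in (m - r)..(m + r), Real.log x ≤ 2 * r * Real.log m := by
  have htangent : ∀ x ∈ Set.Ioo (m - r) (m + r), Real.log x ≤ Real.log m + (x / m - 1) := by
    intro x hx
    have hx0 : 0 < x := by linarith [hx.1]
    have h := Real.log_le_sub_one_of_pos (div_pos hx0 hm)
    rw [Real.log_div hx0.ne' hm.ne'] at h
    linarith
  calc ∫ x in (m - r)..(m + r), Real.log x
      ≤ ∫ x in (m - r)..(m + r), (Real.log m + (x / m - 1)) :=
        intervalIntegral.integral_mono_on_of_le_Ioo (by linarith)
          intervalIntegral.intervalIntegrable_log'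
          (Continuous.intervalIntegrable (by fun_prop) _ _) htangent
    _ = 2 * r * Real.log m := by
        rw [intervalIntegral.integral_add (by simp)
            (Continuous.intervalIntegrable (by fun_prop) _ _),
          intervalIntegral.integral_sub (Continuous.intervalIntegrable (by fun_prop) _ _) (by simp),
          intervalIntegral.integral_div]
        simp only [intervalIntegral.integral_const, integral_id, smul_eq_mul]
        field_simp
        ring

lemma div_exp_one_pow_le_prod_odd (q : ℕ) :
    (2 * q / Real.exp 1) ^ q ≤ ∏ i ∈ Finset.range q, (2 * i + 1 : ℝ) := by
  have hint : ∫ x in (0 : ℝ)..(2 * q), Real.log x ≤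
      2 * ∑ i ∈ Finset.range q, Real.log (2 * i + 1) := by
    have hsum := intervalIntegral.sum_integral_adjacent_intervals (a := fun i : ℕ => (2 * i : ℝ))
      (n := q) (f := Real.log) (μ := volume) fun i _ => intervalIntegral.intervalIntegrable_log'
    simp only [Nat.cast_zero, mul_zero] at hsum
    rw [← hsum, Finset.mul_sum]
    refine Finset.sum_le_sum fun i _ => ?_
    have h := integral_log_le (m := 2 * i + 1) zero_le_one (by linarith [i.cast_nonneg (α := ℝ)])
      (by positivity)
    rw [mul_one, add_sub_cancel_right, add_assoc, one_add_one_eq_two] at h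
    simpa only [Nat.cast_succ, mul_add_one] using h
  rcases q.eq_zero_or_pos with rfl | hq
  · simp
  have hq' : (0 : ℝ) < 2 * q := by positivity
  rw [integral_log, ← Real.log_prod fun i _ => by positivity] at hint
  rw [← Real.log_le_log_iff (by positivity) (Finset.prod_pos fun i _ => by positivity),
    Real.log_pow, Real.log_div hq'.ne' (Real.exp_ne_zero 1), Real.log_exp]
  linarith

lemma succ_div_exp_one_pow_le_factorial (n : ℕ) :
    ((n + 1) / Real.exp 1) ^ n ≤ (n.factorial : ℝ) := by
  induction n with
  | zero => simp
  | succ n ih =>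
    have hexp : ((n + 2) / (n + 1) : ℝ) ^ (n + 1) ≤ Real.exp 1 := by
      have h := Real.add_one_le_exp (1 / (n + 1) : ℝ)
      calc ((n + 2) / (n + 1) : ℝ) ^ (n + 1) = (1 / (n + 1) + 1) ^ (n + 1) := by
            congr 1
            field_simp
            ring
        _ ≤ Real.exp (1 / (n + 1)) ^ (n + 1) := by gcongr
        _ = Real.exp 1 := by
            rw [← Real.exp_nat_mul]
            push_cast
            rw [mul_one_div_cancel (by positivity)]
    calc ((↑(n + 1) + 1) / Real.exp 1) ^ (n + 1)
        = ((n + 2) / (n + 1)) ^ (n + 1) / Real.exp 1 * ((n + 1) * ((n + 1) / Real.exp 1) ^ n) := by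
          push_cast
          rw [add_assoc, one_add_one_eq_two, div_pow, div_pow, div_pow, pow_succ (Real.exp 1),
            pow_succ (n + 1 : ℝ)]
          field_simp
      _ ≤ 1 * ((n + 1) * n.factorial) := by
          gcongr
          exact (div_le_one (Real.exp_pos 1)).2 hexp
      _ = ((n + 1).factorial : ℝ) := by
          rw [Nat.factorial_succ]
          push_cast
          ring

lemma prod_odd_mul_prod_even (q : ℕ) :
    (∏ i ∈ Finset.range q, (2 * i + 1 : ℝ)) * ∏ i ∈ Finset.range q, (2 * i + 2 : ℝ) =
      ((2 * q).factorial : ℝ) := by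
  induction q with
  | zero => simp
  | succ q ih =>
    rw [Finset.prod_range_succ, Finset.prod_range_succ, show 2 * (q + 1) = 2 * q + 1 + 1 by ring,
      Nat.factorial_succ, Nat.factorial_succ]
    push_cast
    rw [← ih]
    ring

lemma div_exp_one_pow_le_prod_mul_prod (p : ℕ) :
    (p / Real.exp 1) ^ (2 * (p / 2)) ≤
      (∏ i ∈ Finset.range (p / 2), (2 * i + 1 : ℝ)) *
        ∏ i ∈ Finset.range (p / 2), (p - 1 - 2 * i : ℝ) := by
  obtain ⟨q, rfl | rfl⟩ := p.even_or_odd'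
  · have hreflect : ∏ i ∈ Finset.range q, ((2 * q : ℕ) - 1 - 2 * i : ℝ) =
        ∏ i ∈ Finset.range q, (2 * i + 1 : ℝ) := by
      rw [← Finset.prod_range_reflect]
      refine Finset.prod_congr rfl fun i hi => ?_
      have := Finset.mem_range.1 hi
      rw [Nat.cast_sub (by omega), Nat.cast_sub (by omega)]
      push_cast
      ring
    rw [Nat.mul_div_cancel_left q two_pos, hreflect, ← sq, mul_comm 2 q, pow_mul, mul_comm q 2]
    push_cast
    gcongr
    exact div_exp_one_pow_le_prod_odd q
  · have hreflect : ∏ i ∈ Finset.range q, ((2 * q + 1 : ℕ) - 1 - 2 * i : ℝ) =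
        ∏ i ∈ Finset.range q, (2 * i + 2 : ℝ) := by
      rw [← Finset.prod_range_reflect]
      refine Finset.prod_congr rfl fun i hi => ?_
      have := Finset.mem_range.1 hi
      rw [Nat.cast_sub (by omega), Nat.cast_sub (by omega)]
      push_cast
      ring
    rw [show (2 * q + 1) / 2 = q by omega, hreflect, prod_odd_mul_prod_even]
    exact_mod_cast succ_div_exp_one_pow_le_factorial (2 * q)

end Products

section TikhonovMoments

open scoped Matrix.Norms.L2Operator

variable {ι κ : Type*} [Fintype ι] [Fintype κ]

lemma norm_pow_two_mul_le [DecidableEq κ] {M : Matrix ι κ ℝ} {q : ℕ} (hq : q ≠ 0) {c : ℝ}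
    (hc : 0 ≤ c) (h : ∀ v, ((M *ᵥ v) ⬝ᵥ (M *ᵥ v)) ^ q ≤ c * (v ⬝ᵥ v) ^ q) : ‖M‖ ^ (2 * q) ≤ c := by
  have h2q : 2 * q ≠ 0 := by positivity
  have hroot := Real.rpow_inv_natCast_pow hc h2q
  rw [← hroot]
  refine pow_le_pow_left₀ (norm_nonneg _)
    (norm_le_of_sqrt_mulVec_le (by positivity) fun v => ?_) _
  refine (pow_le_pow_iff_left₀ (by positivity) (by positivity) h2q).1 ?_
  rw [mul_pow, hroot, pow_mul, pow_mul, Real.sq_sqrt (dotProduct_self_nonneg _),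
    Real.sq_sqrt (dotProduct_self_nonneg _)]
  exact h v

/-- For every `y`, the Gaussian variable `Tᵀ y ⬝ h = y ⬝ T h` has variance `|Tᵀ y|²` and is at most
`|y| |T h|`. -/
lemma prod_odd_mul_norm_pow_le [DecidableEq ι] (T : Matrix κ ι ℝ) {q : ℕ}
    (hq : q ≠ 0) :
    (∏ i ∈ Finset.range q, (2 * i + 1 : ℝ)) * ‖T‖ ^ (2 * q) ≤
      ∫ h, ((T *ᵥ h) ⬝ᵥ (T *ᵥ h)) ^ q ∂(stdGaussianPi ι) := by
  classical
  have hodd : 0 < ∏ i ∈ Finset.range q, (2 * i + 1 : ℝ) := Finset.prod_pos fun i _ => by positivity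
  rw [mul_comm, ← le_div_iff₀ hodd, ← norm_transpose_eq]
  refine norm_pow_two_mul_le hq (div_nonneg (integral_nonneg fun h =>
    pow_nonneg (dotProduct_self_nonneg _) q) hodd.le) fun y => ?_
  rw [div_mul_eq_mul_div, le_div_iff₀ hodd, mul_comm, ← integral_dotProduct_pow_two_mul,
    ← integral_mul_const]
  refine integral_mono (HasPolynomialGrowth.integrable (by fun_prop))
    (HasPolynomialGrowth.integrable (by fun_prop)) fun h => ?_
  rw [mulVec_transpose, ← dotProduct_mulVec, pow_mul, ← mul_pow, mul_comm (_ ⬝ᵥ _) (y ⬝ᵥ y)]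
  gcongr
  simpa only [dotProduct, sq] using Finset.sum_mul_sq_le_sq_mul_sq Finset.univ y (T *ᵥ h)

lemma integral_pow_two_mul_ge {α : Type*} [MeasurableSpace α] {μ : Measure α}
    [IsProbabilityMeasure μ] {f : α → ℝ} {q : ℕ} (hf : Integrable f μ)
    (hfq : Integrable (fun x => f x ^ (2 * q)) μ) :
    (∫ x, f x ∂μ) ^ (2 * q) ≤ ∫ x, f x ^ (2 * q) ∂μ :=
  (even_two_mul q).convexOn_pow.map_integral_le (by fun_prop) isClosed_univ (by simp) hf hfq

lemma prod_card_sub_nonneg {q : ℕ} (hq : Fintype.card ι + 2 * q ≤ Fintype.card κ) :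
    (0 : ℝ) ≤ ∏ i ∈ Finset.range q, (Fintype.card κ - Fintype.card ι - 1 - 2 * i : ℝ) := by
  refine Finset.prod_nonneg fun i hi => ?_
  have hi' : Fintype.card ι + 1 + 2 * i ≤ Fintype.card κ := by
    have := Finset.mem_range.1 hi
    omega
  have : (Fintype.card ι + 1 + 2 * i : ℝ) ≤ Fintype.card κ := by exact_mod_cast hi'
  linarith

variable [DecidableEq ι] {ε : ℝ}

lemma frobNorm_sq_eq_sum_mulVec_single (M : Matrix κ ι ℝ) :
    frobNorm M ^ 2 = ∑ i, (M *ᵥ Pi.single i 1) ⬝ᵥ (M *ᵥ Pi.single i 1) := by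
  rw [frobNorm, Real.sq_sqrt (by positivity), Finset.sum_comm]
  simp only [mulVec_single_one, dotProduct, col_apply, ← sq]

lemma frobNorm_tikhonovPinv_sq_add (hε : 0 < ε) (M : Matrix ι κ ℝ) :
    frobNorm (tikhonovPinv ε M) ^ 2 + ε * frobNorm (gramResolvent ε M) ^ 2 =
      (gramResolvent ε M).trace := by
  simp only [frobNorm_sq_eq_sum_mulVec_single, tikhonovPinv_mulVec_dotProduct_self hε,
    Finset.sum_sub_distrib, ← Finset.mul_sum, sub_add_cancel]
  simp [trace]

lemma frobNorm_tikhonovPinv_le (hε : 0 < ε) (M : Matrix ι κ ℝ) :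
    frobNorm (tikhonovPinv ε M) ≤ √(gramResolvent ε M).trace := by
  rw [← frobNorm_tikhonovPinv_sq_add hε]
  exact Real.le_sqrt_of_sq_le (le_add_of_nonneg_right (by positivity))

lemma mul_norm_gramResolvent_le (hε : 0 < ε) (M : Matrix ι κ ℝ) :
    ε * ‖gramResolvent ε M‖ ≤ √ε * √(gramResolvent ε M).trace := by
  have hfrob : ε * frobNorm (gramResolvent ε M) ^ 2 ≤ (gramResolvent ε M).trace := by
    rw [← frobNorm_tikhonovPinv_sq_add hε]
    exact le_add_of_nonneg_left (by positivity)
  rw [← Real.sqrt_mul hε.le]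
  refine Real.le_sqrt_of_sq_le ?_
  calc (ε * ‖gramResolvent ε M‖) ^ 2 = ε * (ε * ‖gramResolvent ε M‖ ^ 2) := by ring
    _ ≤ ε * (ε * frobNorm (gramResolvent ε M) ^ 2) := by
      gcongr
      exact norm_le_frobNorm _
    _ ≤ _ := by gcongr

lemma integral_trace_gramResolvent_le (hε : 0 < ε)
    (h : Fintype.card ι + 2 ≤ Fintype.card κ) :
    ∫ g, (gramResolvent ε (matrixOfEntries g : Matrix ι κ ℝ)).trace ∂(stdGaussianPi (ι × κ)) ≤
      Fintype.card ι / (Fintype.card κ - Fintype.card ι - 1) := by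
  have hW := hasPolynomialGrowth_gramResolvent (ι := ι) (κ := κ) hε
  have hpos : (0 : ℝ) < Fintype.card κ - Fintype.card ι - 1 := by
    have : (Fintype.card ι + 2 : ℝ) ≤ Fintype.card κ := by exact_mod_cast h
    linarith
  have hdiag (i : ι) : ∫ g, gramResolvent ε (matrixOfEntries g : Matrix ι κ ℝ) i i
      ∂(stdGaussianPi (ι × κ)) ≤ 1 / (Fintype.card κ - Fintype.card ι - 1) := by
    rw [le_div_iff₀' hpos]
    simpa using
      integral_dotProduct_gramResolvent_pow_succ_le (κ := κ) hε (Pi.single i 1 : ι → ℝ) 0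
  simp only [trace, diag_apply]
  rw [integral_finsetSum _ fun i _ => (hW i i).integrable]
  exact (Finset.sum_le_sum fun i _ => hdiag i).trans_eq (by simp [div_eq_mul_inv])

lemma integral_sqrt_trace_gramResolvent_le (hε : 0 < ε)
    (h : Fintype.card ι + 2 ≤ Fintype.card κ) :
    ∫ g, √(gramResolvent ε (matrixOfEntries g : Matrix ι κ ℝ)).trace ∂(stdGaussianPi (ι × κ)) ≤
      √(Fintype.card ι / (Fintype.card κ - Fintype.card ι - 1)) := by
  have hW := hasPolynomialGrowth_gramResolvent (ι := ι) (κ := κ) hε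
  refine (integral_sqrt_le ?_ fun g => (posSemidef_gramResolvent hε _).trace_nonneg).trans
    (Real.sqrt_le_sqrt (integral_trace_gramResolvent_le hε h))
  exact (HasPolynomialGrowth.sum fun i => hW i i).integrable

lemma prod_mul_integral_dotProduct_gramResolvent_pow_le (hε : 0 < ε) (h : ι → ℝ) {q : ℕ}
    (hq : Fintype.card ι + 2 * q ≤ Fintype.card κ) :
    (∏ i ∈ Finset.range q, (Fintype.card κ - Fintype.card ι - 1 - 2 * i : ℝ)) *
        ∫ g, (h ⬝ᵥ gramResolvent ε (matrixOfEntries g) *ᵥ h) ^ q ∂(stdGaussianPi (ι × κ)) ≤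
      (h ⬝ᵥ h) ^ q := by
  induction q with
  | zero => simp
  | succ q ih =>
    rw [Finset.prod_range_succ, mul_assoc]
    refine (mul_le_mul_of_nonneg_left (integral_dotProduct_gramResolvent_pow_succ_le hε h q)
      (prod_card_sub_nonneg (by omega))).trans ?_
    rw [mul_left_comm, pow_succ' (h ⬝ᵥ h)]
    exact mul_le_mul_of_nonneg_left (ih (by omega)) (dotProduct_self_nonneg h)

lemma integrable_dotProduct_gramResolvent_pow (hε : 0 < ε) (q : ℕ) :
    Integrable (fun x : (ι × κ → ℝ) × (ι → ℝ) =>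
      (x.2 ⬝ᵥ gramResolvent ε (matrixOfEntries x.1) *ᵥ x.2) ^ q)
      ((stdGaussianPi (ι × κ)).prod (stdGaussianPi ι)) := by
  refine HasPolynomialGrowth.integrable ?_
  have := fun i j => (hasPolynomialGrowth_gramResolvent (ι := ι) (κ := κ) hε i j).comp
    (HasPolynomialGrowth.fst (F := ι → ℝ))
  fun_prop

/-- The moment of `‖T‖` is dominated by that of `|T h|` for an independent Gaussian vector `h`, and
then the two integrations are exchanged. -/
lemma prod_odd_mul_integral_norm_tikhonovPinv_pow_le (hε : 0 < ε) {q : ℕ} (hq : q ≠ 0) :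
    (∏ i ∈ Finset.range q, (2 * i + 1 : ℝ)) *
        ∫ g, ‖tikhonovPinv ε (matrixOfEntries g : Matrix ι κ ℝ)‖ ^ (2 * q)
          ∂(stdGaussianPi (ι × κ)) ≤
      ∫ h, ∫ g, (h ⬝ᵥ gramResolvent ε (matrixOfEntries g : Matrix ι κ ℝ) *ᵥ h) ^ q
        ∂(stdGaussianPi (ι × κ)) ∂(stdGaussianPi ι) := by
  have hT := hasPolynomialGrowth_tikhonovPinv (ι := ι) (κ := κ) hε
  have hint := integrable_dotProduct_gramResolvent_pow (ι := ι) (κ := κ) hε q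
  rw [← integral_integral_swap hint, ← integral_const_mul]
  refine integral_mono (((HasPolynomialGrowth.norm_matrix hT).pow _).integrable.const_mul _)
    hint.integral_prod_left fun g => (prod_odd_mul_norm_pow_le _ hq).trans ?_
  refine integral_mono (HasPolynomialGrowth.integrable (by fun_prop))
    (HasPolynomialGrowth.integrable (by fun_prop)) fun h => ?_
  exact pow_le_pow_left₀ (dotProduct_self_nonneg _)
    (tikhonovPinv_mulVec_dotProduct_self_le hε (matrixOfEntries g) h) q

lemma prod_mul_integral_norm_tikhonovPinv_pow_le (hε : 0 < ε) {q : ℕ} (hq0 : q ≠ 0)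
    (hq : Fintype.card ι + 2 * q ≤ Fintype.card κ) :
    (∏ i ∈ Finset.range q, (2 * i + 1 : ℝ)) *
          (∏ i ∈ Finset.range q, (Fintype.card κ - Fintype.card ι - 1 - 2 * i : ℝ)) *
        ∫ g, ‖tikhonovPinv ε (matrixOfEntries g : Matrix ι κ ℝ)‖ ^ (2 * q)
          ∂(stdGaussianPi (ι × κ)) ≤
      (Fintype.card κ : ℝ) ^ q := by
  rw [mul_comm (∏ i ∈ Finset.range q, (2 * i + 1 : ℝ)), mul_assoc]
  refine (mul_le_mul_of_nonneg_left (prod_odd_mul_integral_norm_tikhonovPinv_pow_le hε hq0)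
    (prod_card_sub_nonneg hq)).trans ?_
  rw [← integral_const_mul]
  calc _ ≤ ∫ h, (h ⬝ᵥ h) ^ q ∂(stdGaussianPi ι) :=
        integral_mono
          ((integrable_dotProduct_gramResolvent_pow hε q).integral_prod_right.const_mul _)
          (HasPolynomialGrowth.integrable (by fun_prop))
          fun h => prod_mul_integral_dotProduct_gramResolvent_pow_le hε h hq
    _ = ∏ i ∈ Finset.range q, (Fintype.card ι + 2 * i : ℝ) := integral_dotProduct_self_pow q
    _ ≤ ∏ _i ∈ Finset.range q, (Fintype.card κ : ℝ) :=
        Finset.prod_le_prod (fun i _ => by positivity) fun i hi => by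
          have := Finset.mem_range.1 hi
          have hi' : Fintype.card ι + 2 * i ≤ Fintype.card κ := by omega
          exact_mod_cast hi'
    _ = (Fintype.card κ : ℝ) ^ q := by simp

theorem integral_norm_tikhonovPinv_le (hε : 0 < ε) (h : Fintype.card ι + 2 ≤ Fintype.card κ) :
    ∫ g, ‖tikhonovPinv ε (matrixOfEntries g : Matrix ι κ ℝ)‖ ∂(stdGaussianPi (ι × κ)) ≤
      Real.exp 1 * √(Fintype.card κ) / (Fintype.card κ - Fintype.card ι) := by
  obtain ⟨p, hp⟩ := Nat.exists_eq_add_of_le (le_self_add.trans h)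
  have hκ : (Fintype.card κ : ℝ) - Fintype.card ι = p := by
    rw [hp, Nat.cast_add, add_sub_cancel_left]
  have hp0 : (0 : ℝ) < p := by
    have : 0 < p := by omega
    exact_mod_cast this
  have hT := hasPolynomialGrowth_tikhonovPinv (ι := ι) (κ := κ) hε
  have hnorm := HasPolynomialGrowth.norm_matrix hT
  have hq : p / 2 ≠ 0 := by omega
  have hmoment := prod_mul_integral_norm_tikhonovPinv_pow_le (ι := ι) (κ := κ) hε hq (by omega)
  have hprod := div_exp_one_pow_le_prod_mul_prod p
  rw [hκ] at hmoment ⊢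
  refine le_of_pow_le_pow_left₀ (mul_ne_zero two_ne_zero hq) (by positivity) ?_
  refine (integral_pow_two_mul_ge hnorm.integrable (hnorm.pow _).integrable).trans ?_
  have hpe : 0 < (p / Real.exp 1) ^ (2 * (p / 2)) := by positivity
  refine (le_div_iff₀' hpe).2 ((mul_le_mul_of_nonneg_right hprod (by positivity)).trans hmoment)
    |>.trans_eq ?_
  rw [div_pow, div_pow, mul_pow, pow_mul (√_), Real.sq_sqrt (Nat.cast_nonneg _)]
  field_simp

end TikhonovMoments

section SingularValues

open scoped Matrix.Norms.L2Operator

variable {n : ℕ}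

lemma isMoorePenrose_pinv_of_isHermitian {S : Matrix (Fin n) (Fin n) 𝕜} (hS : S.IsHermitian) :
    IsMoorePenrose S (pinv S) := by
  have hsa : IsSelfAdjoint S := hS
  have hc (f : ℝ → ℝ) : ContinuousOn f (spectrum ℝ S) := finite_real_spectrum.continuousOn f
  have hex : ∃ X, IsMoorePenrose S X := by
    have hmul : S * cfc (fun x : ℝ => x⁻¹) S = cfc (fun x : ℝ => x * x⁻¹) S := by
      rw [cfc_mul (fun x => x) _ S (hc _) (hc _), cfc_id' ℝ S]
    have hmul' : cfc (fun x : ℝ => x⁻¹) S * S = cfc (fun x : ℝ => x⁻¹ * x) S := by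
      rw [cfc_mul _ (fun x => x) S (hc _) (hc _), cfc_id' ℝ S]
    have hsymm (f : ℝ → ℝ) : (cfc f S)ᴴ = cfc f S := (cfc_predicate f S).star_eq
    refine ⟨cfc (fun x : ℝ => x⁻¹) S, ?_, ?_, by rw [hmul, hsymm], by rw [hmul', hsymm]⟩
    · calc _ = cfc (fun x : ℝ => x * x⁻¹) S * cfc (fun x : ℝ => x) S := by rw [hmul, cfc_id' ℝ S]
        _ = S := by
          rw [← cfc_mul _ _ S (hc _) (hc _)]
          simp only [mul_inv_mul_cancel, cfc_id' ℝ S]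
    · rw [hmul', ← cfc_mul _ _ S (hc _) (hc _)]
      exact cfc_congr fun x _ => by simpa only [inv_inv] using mul_inv_mul_cancel x⁻¹
  rw [pinv, dif_pos hex]
  exact hex.choose_spec

lemma schatten_top_le_norm (M : Matrix (Fin n) (Fin n) 𝕜) : schatten ⊤ M ≤ ‖M‖ := by
  rw [schatten, if_pos rfl, sval]
  split_ifs with h
  · set hH := (posSemidef_conjTranspose_mul_self M).1
    generalize Tuple.sort hH.eigenvalues (Fin.rev ⟨0, h⟩) = j
    have : Nonempty (Fin n) := ⟨⟨0, h⟩⟩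
    have : CompleteSpace (Matrix (Fin n) (Fin n) 𝕜) := FiniteDimensional.complete 𝕜 _
    have hj : ((hH.eigenvalues j : ℝ) : 𝕜) ∈ spectrum 𝕜 (Mᴴ * M) :=
      spectrum.algebraMap_mem 𝕜 (hH.eigenvalues_mem_spectrum_real j)
    rw [Real.sqrt_le_left (norm_nonneg _), sq, ← l2_opNorm_conjTranspose_mul_self]
    exact (le_abs_self _).trans
      (RCLike.norm_ofReal (K := 𝕜) _ ▸ spectrum.norm_le_norm_of_mem hj)
  · exact norm_nonneg _

lemma sval_nonneg (M : Matrix (Fin n) (Fin n) 𝕜) (i : ℕ) : 0 ≤ sval M i := by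
  unfold sval
  split_ifs
  exacts [Real.sqrt_nonneg _, le_rfl]

lemma antitone_sval (M : Matrix (Fin n) (Fin n) 𝕜) : Antitone (sval M) := fun i j hij => by
  by_cases hj : j < n
  · rw [sval, sval, dif_pos hj, dif_pos (hij.trans_lt hj)]
    set e := (posSemidef_conjTranspose_mul_self M).1.eigenvalues
    exact Real.sqrt_le_sqrt (Tuple.monotone_sort e (Fin.rev_le_rev.2 hij))
  · rw [sval, dif_neg hj]
    exact sval_nonneg M i

lemma exists_mem_unitaryGroup_eq_mul_diagonal_sval {A : Matrix (Fin n) (Fin n) 𝕜}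
    (hA : A.PosSemidef) : ∃ V ∈ unitaryGroup (Fin n) 𝕜,
      A = V * diagonal (fun i : Fin n => (sval A i : 𝕜)) * Vᴴ := by
  set hH := (posSemidef_conjTranspose_mul_self A).1
  let π : Fin n ≃ Fin n := Fin.revPerm.trans (Tuple.sort hH.eigenvalues)
  set U := (hH.eigenvectorUnitary : Matrix (Fin n) (Fin n) 𝕜)
  have hU : U * Uᴴ = 1 := Unitary.mul_star_self_of_mem hH.eigenvectorUnitary.2
  let V : Matrix (Fin n) (Fin n) 𝕜 := U.submatrix id π
  let D : Matrix (Fin n) (Fin n) 𝕜 := diagonal fun i : Fin n => (sval A i : 𝕜)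
  have hV : V * Vᴴ = 1 := by
    rw [conjTranspose_submatrix, submatrix_mul_equiv, hU, submatrix_id_id]
  have hD : D * D = (diagonal (RCLike.ofReal ∘ hH.eigenvalues)).submatrix π π := by
    rw [diagonal_mul_diagonal, submatrix_diagonal_equiv]
    congr 1
    ext i
    rw [Function.comp_apply, Function.comp_apply, ← RCLike.ofReal_mul, sval, dif_pos i.2,
      Real.mul_self_sqrt ((posSemidef_conjTranspose_mul_self A).eigenvalues_nonneg _)]
    rfl
  have hsq : A * A = (V * D * Vᴴ) * (V * D * Vᴴ) := by
    calc A * A = Aᴴ * A := by rw [hA.1.eq]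
      _ = V * (D * D) * Vᴴ := by
        rw [hD, conjTranspose_submatrix, submatrix_mul_equiv, submatrix_mul_equiv, submatrix_id_id]
        exact hH.spectral_theorem
      _ = V * D * (Vᴴ * V) * D * Vᴴ := by
        rw [mul_eq_one_comm.1 hV, Matrix.mul_one]
        simp only [Matrix.mul_assoc]
      _ = _ := by simp only [Matrix.mul_assoc]
  have hX : (V * D * Vᴴ).PosSemidef :=
    PosSemidef.mul_mul_conjTranspose_same
      (.diagonal fun i : Fin n => RCLike.ofReal_nonneg.2 (sval_nonneg A i)) V
  refine ⟨V, mem_unitaryGroup_iff.2 hV, ?_⟩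
  open scoped MatrixOrder in
  exact (CFC.mul_self_eq_mul_self_iff A _ hA.nonneg hX.nonneg).1 hsq

end SingularValues

section NystromResidual

open scoped Matrix.Norms.L2Operator

variable {n k : ℕ} {α : Type*} [Fintype α]

/-- The orthogonal projection onto the column space of `K`. -/
noncomputable def colSpaceProjection (K : Matrix α (Fin k) 𝕜) : Matrix α α 𝕜 :=
  K * pinv (Kᴴ * K) * Kᴴ

lemma colSpaceProjection_mul_self (K : Matrix α (Fin k) 𝕜) : colSpaceProjection K * K = K := by
  have hpen := (isMoorePenrose_pinv_of_isHermitian (isHermitian_conjTranspose_mul_self K)).1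
  have h : Kᴴ * K * (pinv (Kᴴ * K) * (Kᴴ * K) - 1) = 0 := by
    rw [Matrix.mul_sub, ← Matrix.mul_assoc, hpen, Matrix.mul_one, sub_self]
  rw [conjTranspose_mul_self_mul_eq_zero, Matrix.mul_sub, Matrix.mul_one, sub_eq_zero] at h
  rwa [colSpaceProjection, Matrix.mul_assoc _ Kᴴ, Matrix.mul_assoc K]

lemma isStarProjection_colSpaceProjection (K : Matrix α (Fin k) 𝕜) :
    IsStarProjection (colSpaceProjection K) := by
  set P := colSpaceProjection K
  have hPK : P * K = K := colSpaceProjection_mul_self K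
  have hPadj : Pᴴ = K * ((pinv (Kᴴ * K))ᴴ * Kᴴ) := by
    simp only [P, colSpaceProjection, conjTranspose_mul, conjTranspose_conjTranspose]
  have hPP : P * Pᴴ = Pᴴ := by rw [hPadj, ← Matrix.mul_assoc, hPK]
  have hsa : Pᴴ = P := by
    have h := (isHermitian_mul_conjTranspose_self P).eq
    rwa [hPP, conjTranspose_conjTranspose, eq_comm] at h
  exact ⟨by rwa [hsa] at hPP, hsa⟩

lemma sub_nystrom_eq [DecidableEq α] {A : Matrix (Fin n) (Fin n) 𝕜} {C : Matrix α (Fin n) 𝕜}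
    (hA : A = Cᴴ * C) (Ω : Matrix (Fin n) (Fin k) 𝕜) :
    A - nystrom A Ω = Cᴴ * (1 - colSpaceProjection (C * Ω)) * C := by
  simp only [nystrom, colSpaceProjection, hA, conjTranspose_mul, Matrix.mul_sub, Matrix.sub_mul,
    Matrix.mul_one, Matrix.mul_assoc]

theorem sqrt_schatten_top_sub_nystrom_le {A : Matrix (Fin n) (Fin n) 𝕜} {C : Matrix α (Fin n) 𝕜}
    (hA : A = Cᴴ * C) (Ω : Matrix (Fin n) (Fin k) 𝕜) (X : Matrix (Fin k) (Fin n) 𝕜) :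
    √(schatten ⊤ (A - nystrom A Ω)) ≤ ‖C - C * Ω * X‖ := by
  classical
  set Q := 1 - colSpaceProjection (C * Ω)
  have hQ : IsStarProjection Q := (isStarProjection_colSpaceProjection _).one_sub
  have hQC : Q * C = Q * (C - C * Ω * X) := by
    have hQK : Q * (C * Ω) = 0 := by
      rw [Matrix.sub_mul, Matrix.one_mul, colSpaceProjection_mul_self, sub_self]
    rw [Matrix.mul_sub, ← Matrix.mul_assoc, hQK, Matrix.zero_mul, sub_zero]
  have hres : A - nystrom A Ω = (Q * C)ᴴ * (Q * C) := by
    have hQQ : Qᴴ * Q = Q := by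
      rw [← star_eq_conjTranspose, hQ.isSelfAdjoint.star_eq, hQ.isIdempotentElem.eq]
    rw [sub_nystrom_eq hA, conjTranspose_mul, Matrix.mul_assoc Cᴴ Qᴴ, ← Matrix.mul_assoc Qᴴ, hQQ,
      Matrix.mul_assoc]
  rw [Real.sqrt_le_left (norm_nonneg _)]
  calc schatten ⊤ (A - nystrom A Ω) ≤ ‖Q * C‖ ^ 2 := by
        rw [sq, ← l2_opNorm_conjTranspose_mul_self, ← hres]
        exact schatten_top_le_norm _
    _ ≤ ‖C - C * Ω * X‖ ^ 2 := by
        rw [hQC]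
        gcongr
        exact (l2_opNorm_mul _ _).trans (mul_le_of_le_one_left (norm_nonneg _) hQ.norm_le)

end NystromResidual

section InvariantSplitting

open scoped Matrix.Norms.L2Operator

variable {ι κ α β : Type*} [Fintype ι] [Fintype κ] [Fintype α] [Fintype β]

lemma norm_le_one_of_transpose_mul_self [DecidableEq α] {V : Matrix ι α ℝ} (hV : Vᵀ * V = 1) :
    ‖V‖ ≤ 1 :=
  norm_le_of_sqrt_mulVec_le zero_le_one fun v => by
    rw [dotProduct_mulVec, ← mulVec_transpose, mulVec_mulVec, hV, one_mulVec, one_mul]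

lemma norm_mul_mul_transpose_le [DecidableEq κ] [DecidableEq α] [DecidableEq β]
    {U : Matrix ι α ℝ} {V : Matrix κ β ℝ} (hU : ‖U‖ ≤ 1) (hV : ‖V‖ ≤ 1) (M : Matrix α β ℝ) :
    ‖U * M * Vᵀ‖ ≤ ‖M‖ := by
  calc ‖U * M * Vᵀ‖ ≤ ‖U‖ * ‖M‖ * ‖Vᵀ‖ :=
        (l2_opNorm_mul _ _).trans (by gcongr; exact l2_opNorm_mul _ _)
    _ ≤ 1 * ‖M‖ * 1 := by
        rw [norm_transpose_eq]
        gcongr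
    _ = ‖M‖ := by rw [one_mul, mul_one]

lemma norm_sub_mul_tikhonovPinv_le [DecidableEq ι] [DecidableEq α] [DecidableEq β]
    {ε : ℝ} (hε : 0 < ε) {V₁ : Matrix ι α ℝ} {V₂ : Matrix ι β ℝ}
    (hV₁ : V₁ᵀ * V₁ = 1) (hV₂ : V₂ᵀ * V₂ = 1) (S₁ : Matrix α α ℝ) (S₂ : Matrix β β ℝ)
    {C : Matrix ι ι ℝ} (hC : C = V₁ * S₁ * V₁ᵀ + V₂ * S₂ * V₂ᵀ) (Ω : Matrix ι κ ℝ) :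
    ‖C - C * Ω * (tikhonovPinv ε (V₁ᵀ * Ω) * V₁ᵀ)‖ ≤
      ‖S₁‖ * (ε * ‖gramResolvent ε (V₁ᵀ * Ω)‖) + ‖S₂‖ +
        ‖S₂ * (V₂ᵀ * Ω) * tikhonovPinv ε (V₁ᵀ * Ω)‖ := by
  set W := gramResolvent ε (V₁ᵀ * Ω)
  set T := tikhonovPinv ε (V₁ᵀ * Ω)
  have hn₁ := norm_le_one_of_transpose_mul_self hV₁
  have hn₂ := norm_le_one_of_transpose_mul_self hV₂
  have hT : V₁ᵀ * Ω * T = 1 - ε • W := mul_tikhonovPinv hε _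
  have hsplit : C - C * Ω * (T * V₁ᵀ) =
      V₁ * (S₁ * ε • W) * V₁ᵀ + V₂ * S₂ * V₂ᵀ - V₂ * (S₂ * (V₂ᵀ * Ω) * T) * V₁ᵀ := by
    have hW : ε • W = 1 - V₁ᵀ * Ω * T := by rw [hT, sub_sub_cancel]
    rw [hW, hC]
    simp only [Matrix.mul_sub, Matrix.sub_mul, Matrix.add_mul, Matrix.mul_one, Matrix.mul_assoc]
    abel
  rw [hsplit]
  refine (norm_sub_le _ _).trans (add_le_add ((norm_add_le _ _).trans (add_le_add ?_ ?_)) ?_)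
  · refine (norm_mul_mul_transpose_le hn₁ hn₁ _).trans ((l2_opNorm_mul _ _).trans_eq ?_)
    rw [norm_smul, Real.norm_of_nonneg hε.le]
  · exact norm_mul_mul_transpose_le hn₂ hn₂ _
  · exact norm_mul_mul_transpose_le hn₂ hn₁ _

end InvariantSplitting

section GaussianEnsemble

open scoped Kronecker Matrix.Norms.L2Operator

variable {n k : ℕ} {α β : Type*} [Fintype α] [Fintype β] [DecidableEq α] [DecidableEq β]

lemma measurePreserving_entries_gaussianEnsemble :
    MeasurePreserving (fun (ω : Fin n → Fin k → ℝ) (p : Fin n × Fin k) => ω p.1 p.2)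
      (gaussianEnsemble n k) (stdGaussianPi (Fin n × Fin k)) := by
  have hmeas : Measurable fun (ω : Fin n → Fin k → ℝ) (p : Fin n × Fin k) => ω p.1 p.2 := by
    fun_prop
  refine ⟨hmeas, (Measure.pi_eq fun s hs => ?_).symm⟩
  have hpre : (fun (ω : Fin n → Fin k → ℝ) (p : Fin n × Fin k) => ω p.1 p.2) ⁻¹' Set.univ.pi s =
      Set.univ.pi fun i => Set.univ.pi fun j => s (i, j) := by
    ext ω
    simp
  rw [Measure.map_apply hmeas (.univ_pi hs), hpre, gaussianEnsemble, Measure.pi_pi,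
    Fintype.prod_prod_type]
  simp_rw [Measure.pi_pi]

lemma transpose_kronecker_one_mul_transpose {α β : Type*} (V : Matrix (Fin n) α ℝ)
    (W : Matrix (Fin n) β ℝ) :
    (Vᵀ ⊗ₖ (1 : Matrix (Fin k) (Fin k) ℝ)) * (Wᵀ ⊗ₖ (1 : Matrix (Fin k) (Fin k) ℝ))ᵀ =
      (Vᵀ * W) ⊗ₖ 1 := by
  rw [← kroneckerMap_transpose, ← mul_kronecker_mul, transpose_transpose, transpose_one, one_mul]

lemma kronecker_one_mulVec_entries {α : Type*} (V : Matrix α (Fin n) ℝ) (ω : Fin n → Fin k → ℝ) :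
    (V ⊗ₖ (1 : Matrix (Fin k) (Fin k) ℝ)) *ᵥ (fun p => ω p.1 p.2) =
      fun p => (V * of ω) p.1 p.2 := by
  have h := kronecker_mulVec_vec (1 : Matrix (Fin k) (Fin k) ℝ) (of ω)ᵀ V
  rwa [Matrix.one_mul, ← transpose_mul] at h

lemma measurePreserving_transpose_mul_gaussianEnsemble {V₁ : Matrix (Fin n) α ℝ}
    {V₂ : Matrix (Fin n) β ℝ} (hV₁ : V₁ᵀ * V₁ = 1) (hV₂ : V₂ᵀ * V₂ = 1) (hV : V₁ᵀ * V₂ = 0) :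
    MeasurePreserving (fun ω : Fin n → Fin k → ℝ =>
        ((fun p : α × Fin k => (V₁ᵀ * of ω) p.1 p.2), (fun p : β × Fin k => (V₂ᵀ * of ω) p.1 p.2)))
      (gaussianEnsemble n k)
      ((stdGaussianPi (α × Fin k)).prod (stdGaussianPi (β × Fin k))) := by
  let Q : Matrix (α × Fin k ⊕ β × Fin k) (Fin n × Fin k) ℝ :=
    fromRows (V₁ᵀ ⊗ₖ 1) (V₂ᵀ ⊗ₖ 1)
  have hQ : Q * Qᵀ = 1 := by
    have hV' : V₂ᵀ * V₁ = 0 := by simpa using congrArg transpose hV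
    rw [transpose_fromRows, fromRows_mul_fromCols]
    simp only [transpose_kronecker_one_mul_transpose, hV₁, hV₂, hV, hV', one_kronecker_one,
      zero_kronecker, fromBlocks_one]
  have hsplit : MeasurePreserving (fun z : α × Fin k ⊕ β × Fin k → ℝ => (z ∘ Sum.inl, z ∘ Sum.inr))
      (stdGaussianPi (α × Fin k ⊕ β × Fin k))
      ((stdGaussianPi (α × Fin k)).prod (stdGaussianPi (β × Fin k))) :=
    measurePreserving_sumPiEquivProdPi fun _ => gaussianReal 0 1
  have h := hsplit.comp <| (measurePreserving_mulVec_stdGaussianPi hQ).comp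
    measurePreserving_entries_gaussianEnsemble
  convert h using 1
  funext ω
  simp only [Function.comp_apply, Q, fromRows_mulVec, kronecker_one_mulVec_entries]
  rfl

end GaussianEnsemble

section NystromExpectation

open scoped Matrix.Norms.L2Operator

variable {n k : ℕ} {α β κ : Type*} [Fintype α] [Fintype β] [Fintype κ]
  [DecidableEq α] {ε : ℝ}

lemma hasPolynomialGrowth_sqrt_trace_gramResolvent (hε : 0 < ε) :
    HasPolynomialGrowth fun g : α × κ → ℝ => √(gramResolvent ε (matrixOfEntries g)).trace := by
  have hW := hasPolynomialGrowth_gramResolvent (ι := α) (κ := κ) hε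
  simp only [trace, diag_apply]
  fun_prop

lemma hasPolynomialGrowth_norm_mul_matrixOfEntries_mul_tikhonovPinv (hε : 0 < ε)
    (S : Matrix β β ℝ) :
    HasPolynomialGrowth fun x : (α × κ → ℝ) × (β × κ → ℝ) =>
      ‖S * matrixOfEntries x.2 * tikhonovPinv ε (matrixOfEntries x.1)‖ := by
  have hT := fun j i => (hasPolynomialGrowth_tikhonovPinv (ι := α) (κ := κ) hε j i).comp
    (HasPolynomialGrowth.fst (F := β × κ → ℝ))
  refine .norm_matrix fun i j => ?_
  simp only [mul_apply, matrixOfEntries, of_apply] at hT ⊢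
  fun_prop

variable [DecidableEq β]

lemma integral_norm_mul_matrixOfEntries_mul_tikhonovPinv_le (hε : 0 < ε)
    (h : Fintype.card α + 2 ≤ Fintype.card κ) (S : Matrix β β ℝ) :
    ∫ x, ‖S * matrixOfEntries x.2 * tikhonovPinv ε (matrixOfEntries x.1)‖
        ∂((stdGaussianPi (α × κ)).prod (stdGaussianPi (β × κ))) ≤
      √(Fintype.card α / (Fintype.card κ - Fintype.card α - 1)) * ‖S‖ +
        Real.exp 1 * √(Fintype.card κ) / (Fintype.card κ - Fintype.card α) * frobNorm S := by
  have hT := ((HasPolynomialGrowth.norm_matrix (hasPolynomialGrowth_tikhonovPinv (ι := α) (κ := κ)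
    hε)).integrable (μ := stdGaussianPi (α × κ))).const_mul (frobNorm S)
  have htrace := ((hasPolynomialGrowth_sqrt_trace_gramResolvent (α := α) (κ := κ) hε).integrable
    (μ := stdGaussianPi (α × κ))).const_mul ‖S‖
  have hint := (hasPolynomialGrowth_norm_mul_matrixOfEntries_mul_tikhonovPinv (α := α) (κ := κ)
    hε S).integrable (μ := (stdGaussianPi (α × κ)).prod (stdGaussianPi (β × κ)))
  have hcond (g : α × κ → ℝ) :
      ∫ y, ‖S * matrixOfEntries y * tikhonovPinv ε (matrixOfEntries g)‖
          ∂(stdGaussianPi (β × κ)) ≤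
        ‖S‖ * √(gramResolvent ε (matrixOfEntries g)).trace +
          frobNorm S * ‖tikhonovPinv ε (matrixOfEntries g)‖ := by
    refine (integral_norm_mul_matrixOfEntries_mul_le S _).trans ?_
    gcongr
    exact frobNorm_tikhonovPinv_le hε _
  rw [integral_prod _ hint]
  calc _ ≤ ∫ g, (‖S‖ * √(gramResolvent ε (matrixOfEntries g : Matrix α κ ℝ)).trace +
          frobNorm S * ‖tikhonovPinv ε (matrixOfEntries g : Matrix α κ ℝ)‖)
            ∂(stdGaussianPi (α × κ)) :=
        integral_mono hint.integral_prod_left (htrace.add hT) hcond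
    _ = ‖S‖ * ∫ g, √(gramResolvent ε (matrixOfEntries g : Matrix α κ ℝ)).trace
            ∂(stdGaussianPi (α × κ)) +
          frobNorm S * ∫ g, ‖tikhonovPinv ε (matrixOfEntries g : Matrix α κ ℝ)‖
            ∂(stdGaussianPi (α × κ)) := by
        rw [integral_add htrace hT, integral_const_mul, integral_const_mul]
    _ ≤ ‖S‖ * √(Fintype.card α / (Fintype.card κ - Fintype.card α - 1)) +
          frobNorm S *
            (Real.exp 1 * √(Fintype.card κ) / (Fintype.card κ - Fintype.card α)) :=
        add_le_add
          (mul_le_mul_of_nonneg_left (integral_sqrt_trace_gramResolvent_le hε h) (norm_nonneg _))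
          (mul_le_mul_of_nonneg_left (integral_norm_tikhonovPinv_le hε h) (Real.sqrt_nonneg _))
    _ = _ := by ring

/-- Pointwise bound for the square root of the Nyström error, as a function of the two independent
blocks `x.1` and `x.2` of the test matrix. The first term, with `r` the norm of the square root of
the head of `A`, is the regularization error; the last is the error that the tail contributes to
the regression on the head. -/
noncomputable def splitResidualBound {α β κ : Type*} [Fintype α] [Fintype β] [Fintype κ]
    [DecidableEq α] [DecidableEq β] (ε r : ℝ) (S : Matrix β β ℝ)
    (x : (α × κ → ℝ) × (β × κ → ℝ)) : ℝ :=
  r * (√ε * √(gramResolvent ε (matrixOfEntries x.1)).trace) + ‖S‖ +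
    ‖S * matrixOfEntries x.2 * tikhonovPinv ε (matrixOfEntries x.1)‖

lemma hasPolynomialGrowth_splitResidualBound (hε : 0 < ε) (r : ℝ) (S : Matrix β β ℝ) :
    HasPolynomialGrowth (splitResidualBound (α := α) (κ := κ) ε r S) := by
  have htrace := (hasPolynomialGrowth_sqrt_trace_gramResolvent (α := α) (κ := κ) hε).comp
    (HasPolynomialGrowth.fst (F := β × κ → ℝ))
  have hcross :=
    hasPolynomialGrowth_norm_mul_matrixOfEntries_mul_tikhonovPinv (α := α) (κ := κ) hε S
  unfold splitResidualBound
  fun_prop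

lemma integral_splitResidualBound_le (hε : 0 < ε)
    (h : Fintype.card α + 2 ≤ Fintype.card κ) {r : ℝ} (hr : 0 ≤ r) (S : Matrix β β ℝ) :
    ∫ x, splitResidualBound ε r S x ∂((stdGaussianPi (α × κ)).prod (stdGaussianPi (β × κ))) ≤
      √ε * (r * √(Fintype.card α / (Fintype.card κ - Fintype.card α - 1))) +
        ((1 + √(Fintype.card α / (Fintype.card κ - Fintype.card α - 1))) * ‖S‖ +
          Real.exp 1 * √(Fintype.card κ) / (Fintype.card κ - Fintype.card α) * frobNorm S) := by
  have htrace := (hasPolynomialGrowth_sqrt_trace_gramResolvent (α := α) (κ := κ) hε).comp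
    (HasPolynomialGrowth.fst (F := β × κ → ℝ))
  have hcross :=
    hasPolynomialGrowth_norm_mul_matrixOfEntries_mul_tikhonovPinv (α := α) (κ := κ) hε S
  have hcross_le := integral_norm_mul_matrixOfEntries_mul_tikhonovPinv_le hε h S
  have htrace_le := mul_le_mul_of_nonneg_left (integral_sqrt_trace_gramResolvent_le hε h)
    (mul_nonneg hr (Real.sqrt_nonneg ε))
  have hsplit : ∫ x, splitResidualBound ε r S x
        ∂((stdGaussianPi (α × κ)).prod (stdGaussianPi (β × κ))) =
      r * √ε * ∫ g, √(gramResolvent ε (matrixOfEntries g : Matrix α κ ℝ)).trace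
          ∂(stdGaussianPi (α × κ)) + ‖S‖ +
        ∫ x, ‖S * matrixOfEntries x.2 * tikhonovPinv ε (matrixOfEntries x.1)‖
          ∂((stdGaussianPi (α × κ)).prod (stdGaussianPi (β × κ))) := by
    unfold splitResidualBound
    rw [integral_add (HasPolynomialGrowth.integrable (by fun_prop)) hcross.integrable,
      integral_add (HasPolynomialGrowth.integrable (by fun_prop)) (integrable_const _),
      integral_const_mul, integral_const_mul,
      integral_fun_fst fun g => √(gramResolvent ε (matrixOfEntries g)).trace]
    simp [mul_assoc]
  rw [hsplit]
  linarith

lemma sqrt_schatten_top_sub_nystrom_le_splitResidualBound (hε : 0 < ε)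
    {A C : Matrix (Fin n) (Fin n) ℝ} (hA : A = Cᴴ * C) {V₁ : Matrix (Fin n) α ℝ}
    {V₂ : Matrix (Fin n) β ℝ} (hV₁ : V₁ᵀ * V₁ = 1) (hV₂ : V₂ᵀ * V₂ = 1)
    {S₁ : Matrix α α ℝ} {S₂ : Matrix β β ℝ} (hC : C = V₁ * S₁ * V₁ᵀ + V₂ * S₂ * V₂ᵀ)
    (ω : Fin n → Fin k → ℝ) :
    √(schatten ⊤ (A - nystrom A (of ω))) ≤ splitResidualBound ε ‖S₁‖ S₂
      (fun p => (V₁ᵀ * of ω) p.1 p.2, fun p => (V₂ᵀ * of ω) p.1 p.2) :=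
  (sqrt_schatten_top_sub_nystrom_le hA (of ω) _).trans <|
    (norm_sub_mul_tikhonovPinv_le hε hV₁ hV₂ S₁ S₂ hC (of ω)).trans <|
      add_le_add_left (add_le_add_left (mul_le_mul_of_nonneg_left
        (mul_norm_gramResolvent_le hε _) (norm_nonneg _)) _) _

theorem integral_sqrt_schatten_top_sub_nystrom_le
    {A C : Matrix (Fin n) (Fin n) ℝ} (hA : A = Cᴴ * C) {V₁ : Matrix (Fin n) α ℝ}
    {V₂ : Matrix (Fin n) β ℝ} (hV₁ : V₁ᵀ * V₁ = 1) (hV₂ : V₂ᵀ * V₂ = 1) (hV : V₁ᵀ * V₂ = 0)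
    {S₁ : Matrix α α ℝ} {S₂ : Matrix β β ℝ} (hC : C = V₁ * S₁ * V₁ᵀ + V₂ * S₂ * V₂ᵀ)
    (h : Fintype.card α + 2 ≤ k) :
    ∫ ω, √(schatten ⊤ (A - nystrom A (of ω))) ∂(gaussianEnsemble n k) ≤
      (1 + √(Fintype.card α / (k - Fintype.card α - 1))) * ‖S₂‖ +
        Real.exp 1 * √k / (k - Fintype.card α) * frobNorm S₂ := by
  set B := (1 + √(Fintype.card α / (k - Fintype.card α - 1))) * ‖S₂‖ +
    Real.exp 1 * √k / (k - Fintype.card α) * frobNorm S₂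
  have hmp := measurePreserving_transpose_mul_gaussianEnsemble (k := k) hV₁ hV₂ hV
  have hregularized (ε : ℝ) (hε : 0 < ε) :
      ∫ ω, √(schatten ⊤ (A - nystrom A (of ω))) ∂(gaussianEnsemble n k) ≤
        √ε * (‖S₁‖ * √(Fintype.card α / (k - Fintype.card α - 1))) + B := by
    have hgrowth := hasPolynomialGrowth_splitResidualBound (α := α) (κ := Fin k) hε ‖S₁‖ S₂
    refine (integral_mono_of_nonneg (.of_forall fun ω => Real.sqrt_nonneg _)
      (hmp.integrable_comp_of_integrable hgrowth.integrable) (.of_forall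
        (sqrt_schatten_top_sub_nystrom_le_splitResidualBound hε hA hV₁ hV₂ hC))).trans ?_
    refine (integral_comp_of_measurePreserving hmp hgrowth.1.aestronglyMeasurable).trans_le ?_
    have hle := integral_splitResidualBound_le (α := α) (κ := Fin k) hε (by simpa using h)
      (norm_nonneg S₁) S₂
    rwa [Fintype.card_fin] at hle
  have hlim : Filter.Tendsto
      (fun ε => √ε * (‖S₁‖ * √(Fintype.card α / (k - Fintype.card α - 1))) + B)
      (nhdsWithin 0 (Set.Ioi 0)) (nhds B) :=
    (Continuous.tendsto' (by fun_prop) 0 _ (by simp)).mono_left nhdsWithin_le_nhds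
  exact ge_of_tendsto hlim (eventually_nhdsWithin_of_forall hregularized)

end NystromExpectation

section SpectralSplitting

open scoped Matrix.Norms.L2Operator

variable {ι κ : Type*}

lemma transpose_submatrix_mul_submatrix [Fintype ι] [DecidableEq κ] {V : Matrix ι κ ℝ}
    (hV : Vᵀ * V = 1) {α β : Type*} (f : α → κ) (g : β → κ) :
    (V.submatrix id f)ᵀ * V.submatrix id g = (1 : Matrix κ κ ℝ).submatrix f g := by
  rw [transpose_submatrix, ← submatrix_mul _ _ _ _ _ Function.bijective_id, hV]

lemma mul_diagonal_mul_transpose_eq_add [Fintype κ] [DecidableEq κ] (V : Matrix ι κ ℝ) (d : κ → ℝ)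
    (p : κ → Prop) [DecidablePred p] :
    V * diagonal d * Vᵀ =
      V.submatrix id (Subtype.val : {i // p i} → κ) * diagonal (fun i : {i // p i} => d i) *
          (V.submatrix id (Subtype.val : {i // p i} → κ))ᵀ +
        V.submatrix id (Subtype.val : {i // ¬p i} → κ) * diagonal (fun i : {i // ¬p i} => d i) *
          (V.submatrix id (Subtype.val : {i // ¬p i} → κ))ᵀ := by
  ext i j
  rw [Matrix.add_apply, mul_apply, mul_apply, mul_apply]
  simp only [mul_diagonal, transpose_apply, submatrix_apply, id]
  exact (Fintype.sum_subtype_add_sum_subtype p fun l => V i l * d l * V j l).symm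

lemma mul_diagonal_mul_transpose_eq_conjTranspose_mul_self [Fintype ι] [Fintype κ] [DecidableEq κ]
    {V : Matrix ι κ ℝ} (hV : Vᵀ * V = 1) {d : κ → ℝ} (hd : ∀ i, 0 ≤ d i) :
    V * diagonal d * Vᵀ =
      (V * diagonal (fun i => √(d i)) * Vᵀ)ᴴ * (V * diagonal (fun i => √(d i)) * Vᵀ) := by
  set D := diagonal fun i => √(d i)
  have hD : D * D = diagonal d := by
    simp only [D, diagonal_mul_diagonal, Real.mul_self_sqrt (hd _)]
  have hDT : Dᵀ = D := diagonal_transpose _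
  calc V * diagonal d * Vᵀ = V * D * (Vᵀ * V) * D * Vᵀ := by
        rw [hV, Matrix.mul_one, Matrix.mul_assoc V D D, hD]
    _ = (V * D * Vᵀ)ᴴ * (V * D * Vᵀ) := by
        simp only [conjTranspose_eq_transpose_of_trivial, transpose_mul, transpose_transpose, hDT,
          Matrix.mul_assoc]

lemma frobNorm_diagonal_sqrt [Fintype κ] [DecidableEq κ] {d : κ → ℝ} (hd : ∀ i, 0 ≤ d i) :
    frobNorm (diagonal fun i => √(d i)) = √(∑ i, d i) := by
  simp [frobNorm, diagonal_apply, Real.sq_sqrt (hd _)]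

lemma norm_diagonal_sqrt_sval_le {n : ℕ} (A : Matrix (Fin n) (Fin n) ℝ) (ϱ : ℕ) :
    ‖diagonal fun i : {i : Fin n // ¬i.1 < ϱ} => √(sval A i)‖ ≤ √(sval A ϱ) := by
  rw [l2_opNorm_diagonal, pi_norm_le_iff_of_nonneg (Real.sqrt_nonneg _)]
  intro i
  rw [Real.norm_of_nonneg (Real.sqrt_nonneg _)]
  exact Real.sqrt_le_sqrt (antitone_sval A (not_lt.1 i.2))

lemma sum_subtype_not_lt_eq_sum_Ico {n : ℕ} (f : ℕ → ℝ) (ϱ : ℕ) :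
    ∑ i : {i : Fin n // ¬i.1 < ϱ}, f i = ∑ i ∈ Finset.Ico ϱ n, f i := by
  rw [← Finset.sum_subtype (p := fun i : Fin n => ¬i.1 < ϱ) {i | ¬i.1 < ϱ} (by simp) fun i => f i,
    Finset.sum_filter, Fin.sum_univ_eq_sum_range fun i => if ¬i < ϱ then f i else 0,
    ← Finset.sum_filter]
  exact Finset.sum_congr (by ext; simp; omega) fun _ _ => rfl

theorem stmt14_general {n k : ℕ} (A : Matrix (Fin n) (Fin n) ℝ) (hA : A.PosSemidef) (ϱ : ℕ)
    (hϱ : ϱ + 1 < k) :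
    (∫ ω, √(schatten ⊤ (A - nystrom A (of ω))) ∂ gaussianEnsemble n k) ≤
      (1 + √((ϱ : ℝ) / ((k : ℝ) - ϱ - 1))) * √(sval A ϱ) +
        (Real.exp 1 * √k / ((k : ℝ) - ϱ)) * √(∑ i ∈ Finset.Ico ϱ n, sval A i) := by
  obtain ⟨V, hV, hAV⟩ := exists_mem_unitaryGroup_eq_mul_diagonal_sval hA
  have hVV : Vᵀ * V = 1 := mem_unitaryGroup_iff'.1 hV
  have hAC := hAV.trans (mul_diagonal_mul_transpose_eq_conjTranspose_mul_self hVV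
    fun i => sval_nonneg A i)
  have hsplit := mul_diagonal_mul_transpose_eq_add V (fun i => √(sval A i)) fun i => i.1 < ϱ
  have hcard : Fintype.card {i : Fin n // i.1 < ϱ} ≤ ϱ := by
    rw [Fintype.card_subtype]
    exact Fin.card_filter_val_lt.trans_le (min_le_right n ϱ)
  have hpos : (ϱ : ℝ) + 1 < k := by exact_mod_cast hϱ
  refine (integral_sqrt_schatten_top_sub_nystrom_le hAC
    ((transpose_submatrix_mul_submatrix hVV _ _).trans (submatrix_one _ Subtype.val_injective))
    ((transpose_submatrix_mul_submatrix hVV _ _).trans (submatrix_one _ Subtype.val_injective))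
    ((transpose_submatrix_mul_submatrix hVV _ _).trans (Matrix.ext fun i j => ?_))
    hsplit (by omega)).trans ?_
  · exact one_apply_ne fun h => j.2 (h ▸ i.2)
  rw [frobNorm_diagonal_sqrt fun i => sval_nonneg A _, sum_subtype_not_lt_eq_sum_Ico]
  have hk : 0 < (k : ℝ) - ϱ - 1 := by linarith
  have hk' : 0 < (k : ℝ) - ϱ := by linarith
  gcongr
  exact norm_diagonal_sqrt_sval_le A ϱ

end SpectralSplitting

theorem stmt14 {n k : ℕ} (A : Matrix (Fin n) (Fin n) ℝ) (hA : A.PosSemidef)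
    (hk : 1 ≤ k) (hkn : k ≤ n) :
    ∀ ϱ : ℕ, ϱ + 1 < k →
      (∫ ω, Real.sqrt (schatten ⊤ (A - nystrom A (Matrix.of ω))) ∂ gaussianEnsemble n k)
        ≤ (1 + Real.sqrt ((ϱ : ℝ) / ((k : ℝ) - ϱ - 1))) * Real.sqrt (sval A ϱ)
          + (Real.exp 1 * Real.sqrt k / ((k : ℝ) - ϱ))
            * Real.sqrt (∑ i ∈ Finset.Ico ϱ n, sval A i) :=
  fun ϱ => stmt14_general A hA ϱ

end PsdSketch
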